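/- (Refined Hardy inequality for the gradient.) Let 2 < q < d. There is a constant C = C(d,q,ψ) such that for every Schwartz function f on ℝ^d, ‖f/|x|‖_{L^q(ℝ^d)} ≤ C ‖∇f‖_{L^q(ℝ^d)}^{1/q} · ‖f‖_{Ḟ^1_{q,2(q−1)}}^{(q−1)/q}. -/

import Mathlib

open MeasureTheory Real FourierTransform

/-!
Two bounds for `‖f/|x|‖_q` are interpolated. The classical Hardy inequality bounds it by `‖∇f‖_q`:
`f(x)` is minus the integral of `∂_t f(tx)` over `t > 1`, and Minkowski's inequality moves the `L^q`
norm inside the integral over dilations. It is also bounded by `‖f‖_{Ḟ^1_{q,r}}` for every `r > 0`.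
For this, sum `|P_N f(x)|` over `N`. If `N|x| ≥ 1`, use `|P_N f| ≤ N⁻¹ g` with
`g = sup_N N |P_N f|`. If `N|x| ≤ 1`, write `P_N f` as the convolution of a fattened kernel with
`P_N f`, and bound it by an average of `N⁻¹ g`. Up to constants, the sum is at most `|x| g(x)` plus
`|x|` times an integral operator applied to `g`, whose kernel is homogeneous of degree `-d` and is
bounded on `L^q` by Schur's test with power weights.
-/

noncomputable section

open Set Filter Function Module Topology
open scoped ENNReal NNReal SchwartzMap

section Schur

variable {α β : Type*} [MeasurableSpace α] [MeasurableSpace β] {μ : Measure α} {ν : Measure β}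

theorem lintegral_mul_rpow_le {q : ℝ} (hq : 1 ≤ q) {w g : α → ℝ≥0∞}
    (hw : AEMeasurable w μ) (hg : AEMeasurable g μ) :
    (∫⁻ x, w x * g x ∂μ) ^ q ≤ (∫⁻ x, w x ∂μ) ^ (q - 1) * ∫⁻ x, w x * g x ^ q ∂μ := by
  have hq0 : 0 < q := by positivity
  have hexp : (q - 1) / q + 1 / q = 1 := by field_simp; ring
  have hq1 : 0 ≤ (q - 1) / q := div_nonneg (sub_nonneg.2 hq) hq0.le
  have hsplit (x : α) : w x * g x = w x ^ ((q - 1) / q) * (w x * g x ^ q) ^ (1 / q) := by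
    rw [ENNReal.mul_rpow_of_nonneg _ _ (by positivity), ← mul_assoc,
      ← ENNReal.rpow_add_of_nonneg _ _ hq1 (by positivity), hexp,
      ← ENNReal.rpow_mul, mul_one_div_cancel hq0.ne', ENNReal.rpow_one, ENNReal.rpow_one]
  have holder := ENNReal.lintegral_mul_norm_pow_le hw (hw.mul (hg.pow_const q))
    hq1 (one_div_nonneg.2 hq0.le) hexp
  calc (∫⁻ x, w x * g x ∂μ) ^ q
      ≤ ((∫⁻ x, w x ∂μ) ^ ((q - 1) / q) * (∫⁻ x, w x * g x ^ q ∂μ) ^ (1 / q)) ^ q := by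
        simp_rw [hsplit]
        gcongr
        exact holder
    _ = (∫⁻ x, w x ∂μ) ^ (q - 1) * ∫⁻ x, w x * g x ^ q ∂μ := by
        rw [ENNReal.mul_rpow_of_nonneg _ _ hq0.le, ← ENNReal.rpow_mul, ← ENNReal.rpow_mul,
          one_div_mul_cancel hq0.ne', div_mul_cancel₀ _ hq0.ne', ENNReal.rpow_one]

theorem lintegral_mul_rpow_le_of_weight {q : ℝ} (hq : 1 ≤ q) {k w g : α → ℝ≥0∞}
    (hk : AEMeasurable k μ) (hw : AEMeasurable w μ) (hg : AEMeasurable g μ)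
    (hw0 : ∀ᵐ x ∂μ, w x ≠ 0) (hwtop : ∀ᵐ x ∂μ, w x ≠ ⊤) :
    (∫⁻ x, k x * g x ∂μ) ^ q ≤
      (∫⁻ x, k x * w x ∂μ) ^ (q - 1) * ∫⁻ x, k x * (w x ^ (1 - q) * g x ^ q) ∂μ := by
  have hsplit : ∫⁻ x, k x * g x ∂μ = ∫⁻ x, k x * w x * (g x / w x) ∂μ := by
    refine lintegral_congr_ae ?_
    filter_upwards [hw0, hwtop] with x h0 htop
    rw [mul_assoc, ENNReal.mul_div_cancel h0 htop]
  have hweight : ∫⁻ x, k x * w x * (g x / w x) ^ q ∂μ =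
      ∫⁻ x, k x * (w x ^ (1 - q) * g x ^ q) ∂μ := by
    refine lintegral_congr_ae ?_
    filter_upwards [hw0, hwtop] with x h0 htop
    rw [ENNReal.div_rpow_of_nonneg _ _ (by positivity), ENNReal.rpow_sub _ _ h0 htop,
      ENNReal.rpow_one, ENNReal.div_eq_inv_mul, ENNReal.div_eq_inv_mul]
    ring
  rw [hsplit, ← hweight]
  exact lintegral_mul_rpow_le hq (hk.mul hw) (hg.div hw)

theorem lintegral_rpow_lintegral_mul_le_of_schur [SFinite μ] [SFinite ν] {q : ℝ} (hq : 1 ≤ q)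
    {K : α → β → ℝ≥0∞} (hK : Measurable (uncurry K)) {v : α → ℝ≥0∞} (hv : Measurable v)
    {w : β → ℝ≥0∞} (hw : Measurable w) (hw0 : ∀ᵐ y ∂ν, w y ≠ 0) (hwtop : ∀ᵐ y ∂ν, w y ≠ ⊤)
    {C₁ C₂ : ℝ≥0∞} (hrow : ∀ᵐ x ∂μ, ∫⁻ y, K x y * w y ∂ν ≤ C₁ * v x)
    (hcol : ∀ᵐ y ∂ν, ∫⁻ x, K x y * v x ^ (q - 1) ∂μ ≤ C₂ * w y ^ (q - 1))
    {g : β → ℝ≥0∞} (hg : Measurable g) :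
    ∫⁻ x, (∫⁻ y, K x y * g y ∂ν) ^ q ∂μ ≤ C₁ ^ (q - 1) * C₂ * ∫⁻ y, g y ^ q ∂ν := by
  have hq1 : 0 ≤ q - 1 := sub_nonneg.2 hq
  have hKx (x : α) : Measurable (K x) := hK.of_uncurry_left
  have hKy (y : β) : Measurable fun x => K x y := hK.of_uncurry_right
  set h : β → ℝ≥0∞ := fun y => w y ^ (1 - q) * g y ^ q
  calc ∫⁻ x, (∫⁻ y, K x y * g y ∂ν) ^ q ∂μ
      ≤ ∫⁻ x, ∫⁻ y, C₁ ^ (q - 1) * (K x y * v x ^ (q - 1) * h y) ∂ν ∂μ := by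
        refine lintegral_mono_ae ?_
        filter_upwards [hrow] with x hx
        have := hKx x
        grw [lintegral_mul_rpow_le_of_weight hq this.aemeasurable hw.aemeasurable
          hg.aemeasurable hw0 hwtop, hx, ENNReal.mul_rpow_of_nonneg _ _ hq1,
          ← lintegral_const_mul _ (by fun_prop)]
        exact (lintegral_congr fun y => by ring).le
    _ = ∫⁻ y, C₁ ^ (q - 1) * ((∫⁻ x, K x y * v x ^ (q - 1) ∂μ) * h y) ∂ν := by
        have hm : Measurable fun p : α × β => K p.1 p.2 * v p.1 ^ (q - 1) * h p.2 :=
          (hK.mul (by fun_prop)).mul (by fun_prop)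
        rw [lintegral_lintegral_swap (hm.const_mul _).aemeasurable]
        congr 1 with y
        have := hKy y
        rw [lintegral_const_mul _ (by fun_prop), lintegral_mul_const _ (by fun_prop)]
    _ ≤ ∫⁻ y, C₁ ^ (q - 1) * C₂ * g y ^ q ∂ν := by
        refine lintegral_mono_ae ?_
        filter_upwards [hcol, hw0, hwtop] with y hy h0 htop
        have hcancel : w y ^ (q - 1) * h y = g y ^ q := by
          rw [← mul_assoc, ← ENNReal.rpow_add _ _ h0 htop, sub_add_sub_cancel, sub_self,
            ENNReal.rpow_zero, one_mul]
        grw [hy, mul_assoc C₂, hcancel, mul_assoc]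
    _ = C₁ ^ (q - 1) * C₂ * ∫⁻ y, g y ^ q ∂ν := lintegral_const_mul _ (hg.pow_const q)

end Schur

section Dilation

variable {E : Type*} [NormedAddCommGroup E] [NormedSpace ℝ E] [FiniteDimensional ℝ E]
  [MeasurableSpace E] [BorelSpace E] (μ : Measure E) [μ.IsAddHaarMeasure]

theorem lintegral_comp_smul {r : ℝ} (hr : 0 < r) (g : E → ℝ≥0∞) :
    ∫⁻ x, g (r • x) ∂μ = ENNReal.ofReal (r ^ (-(finrank ℝ E : ℝ))) * ∫⁻ x, g x ∂μ := by
  rw [← (measurableEmbedding_const_smul₀ hr.ne').lintegral_map, Measure.map_addHaar_smul μ hr.ne',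
    lintegral_smul_measure, smul_eq_mul, abs_of_pos (by positivity), rpow_neg hr.le, rpow_natCast]

theorem lintegral_rpow_lintegral_comp_smul_le {q : ℝ} (hq : 1 ≤ q) {s : Set ℝ}
    (hs : MeasurableSet s) (hs0 : s ⊆ Ioi 0) {g : E → ℝ≥0∞} (hg : Measurable g) :
    ∫⁻ x, (∫⁻ t in s, g (t • x)) ^ q ∂μ ≤
      (∫⁻ t in s, ENNReal.ofReal (t ^ (-(finrank ℝ E / q)))) ^ q * ∫⁻ x, g x ^ q ∂μ := by
  set a : ℝ := finrank ℝ E / q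
  set w : ℝ → ℝ≥0∞ := fun t => ENNReal.ofReal (t ^ (-a))
  have hpos : ∀ᵐ t ∂volume.restrict s, 0 < t := ae_restrict_of_forall_mem hs hs0
  have hinner : ∀ᵐ t ∂volume.restrict s,
      ∫⁻ x, w t ^ (1 - q) * g (t • x) ^ q ∂μ = w t * ∫⁻ x, g x ^ q ∂μ := by
    filter_upwards [hpos] with t ht
    rw [lintegral_const_mul _ (by fun_prop), lintegral_comp_smul μ ht fun x => g x ^ q,
      ← mul_assoc, ENNReal.ofReal_rpow_of_pos (by positivity), ← rpow_mul ht.le,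
      ← ENNReal.ofReal_mul (by positivity), ← rpow_add ht]
    congr 4
    simp only [a]
    field_simp
    ring
  calc ∫⁻ x, (∫⁻ t in s, g (t • x)) ^ q ∂μ
      ≤ ∫⁻ x, (∫⁻ t in s, w t) ^ (q - 1) *
          (∫⁻ t in s, w t ^ (1 - q) * g (t • x) ^ q) ∂μ := by
        refine lintegral_mono fun x => ?_
        simpa only [one_mul] using lintegral_mul_rpow_le_of_weight hq
          (k := fun _ => 1) aemeasurable_const (by fun_prop : Measurable w).aemeasurable
          (by fun_prop : Measurable fun t : ℝ => g (t • x)).aemeasurable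
          (hpos.mono fun t ht => by simpa [w] using rpow_pos_of_pos ht _)
          (.of_forall fun t => ENNReal.ofReal_ne_top)
    _ = (∫⁻ t in s, w t) ^ (q - 1) * ∫⁻ t in s, ∫⁻ x, w t ^ (1 - q) * g (t • x) ^ q ∂μ := by
        have hm : Measurable fun p : E × ℝ => w p.2 ^ (1 - q) * g (p.2 • p.1) ^ q := by fun_prop
        rw [lintegral_const_mul _ hm.lintegral_prod_right',
          lintegral_lintegral_swap hm.aemeasurable]
    _ = (∫⁻ t in s, w t) ^ (q - 1) * (∫⁻ t in s, w t) ^ (1 : ℝ) * ∫⁻ x, g x ^ q ∂μ := by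
        rw [lintegral_congr_ae hinner, lintegral_mul_const _ (by fun_prop), ENNReal.rpow_one,
          mul_assoc]
    _ = (∫⁻ t in s, w t) ^ q * ∫⁻ x, g x ^ q ∂μ := by
        rw [← ENNReal.rpow_add_of_nonneg _ _ (sub_nonneg.2 hq) zero_le_one, sub_add_cancel]

end Dilation

section Hardy

variable {E F : Type*} [NormedAddCommGroup E] [NormedSpace ℝ E]
  [NormedAddCommGroup F] [NormedSpace ℝ F]

theorem enorm_le_lintegral_enorm_fderiv_smul {f : E → F} (hf : ContDiff ℝ 1 f)
    (hf0 : Tendsto f (Bornology.cobounded E) (𝓝 0)) {x : E} (hx : x ≠ 0) :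
    ‖f x‖ₑ ≤ ‖x‖ₑ * ∫⁻ t in Ioi (1 : ℝ), ‖fderiv ℝ f (t • x)‖ₑ := by
  have hray : ContDiff ℝ 1 fun t : ℝ => f (t • x) := hf.comp (by fun_prop)
  have hderiv (t : ℝ) : ‖deriv (fun t : ℝ => f (t • x)) t‖ₑ ≤ ‖x‖ₑ * ‖fderiv ℝ f (t • x)‖ₑ := by
    have : HasDerivAt (fun t : ℝ => f (t • x)) (fderiv ℝ f (t • x) x) t :=
      (hf.differentiable one_ne_zero _).hasFDerivAt.comp_hasDerivAt t
        (by simpa using (hasDerivAt_id t).smul_const x)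
    rw [this.deriv, mul_comm]
    exact ContinuousLinearMap.le_opENorm _ _
  have hsub (T : ℝ) (hT : 1 ≤ T) :
      ‖f (T • x) - f x‖ₑ ≤ ‖x‖ₑ * ∫⁻ t in Ioi (1 : ℝ), ‖fderiv ℝ f (t • x)‖ₑ :=
    calc ‖f (T • x) - f x‖ₑ ≤ ∫⁻ t in Icc 1 T, ‖deriv (fun t : ℝ => f (t • x)) t‖ₑ := by
          simpa using enorm_sub_le_lintegral_deriv_of_contDiffOn_Icc hray.contDiffOn hT
      _ ≤ ∫⁻ t in Ici (1 : ℝ), ‖x‖ₑ * ‖fderiv ℝ f (t • x)‖ₑ :=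
          (lintegral_mono fun t => hderiv t).trans (lintegral_mono_set Icc_subset_Ici_self)
      _ = ‖x‖ₑ * ∫⁻ t in Ioi (1 : ℝ), ‖fderiv ℝ f (t • x)‖ₑ := by
          rw [lintegral_const_mul' _ _ enorm_ne_top, setLIntegral_congr Ioi_ae_eq_Ici]
  have hescape : Tendsto (fun T : ℝ => T • x) atTop (Bornology.cobounded E) := by
    rw [← tendsto_norm_atTop_iff_cobounded]
    simp only [norm_smul]
    exact tendsto_norm_atTop_atTop.atTop_mul_const (norm_pos_iff.2 hx)
  have hlim : Tendsto (fun T : ℝ => ‖f (T • x) - f x‖ₑ) atTop (𝓝 ‖f x‖ₑ) := by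
    simpa using ((hf0.comp hescape).sub_const (f x)).enorm
  exact le_of_tendsto hlim ((eventually_ge_atTop 1).mono hsub)

variable [FiniteDimensional ℝ E] [MeasurableSpace E] [BorelSpace E] (μ : Measure E)
  [μ.IsAddHaarMeasure]

theorem lintegral_enorm_div_enorm_rpow_le_fderiv {q : ℝ} (hq : 1 ≤ q) (hqn : q < finrank ℝ E)
    {f : E → F} (hf : ContDiff ℝ 1 f) (hf0 : Tendsto f (Bornology.cobounded E) (𝓝 0)) :
    ∫⁻ x, (‖f x‖ₑ / ‖x‖ₑ) ^ q ∂μ ≤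
      ENNReal.ofReal (q / (finrank ℝ E - q)) ^ q * ∫⁻ x, ‖fderiv ℝ f x‖ₑ ^ q ∂μ := by
  have hq0 : 0 < q := by positivity
  have : Nontrivial E := nontrivial_of_finrank_pos (R := ℝ) (by exact_mod_cast hq0.trans hqn)
  have hexp : -(finrank ℝ E / q) < -1 := by rwa [neg_lt_neg_iff, one_lt_div hq0]
  have hweight : ∫⁻ t in Ioi (1 : ℝ), ENNReal.ofReal (t ^ (-(finrank ℝ E / q))) =
      ENNReal.ofReal (q / (finrank ℝ E - q)) := by
    rw [← ofReal_integral_eq_lintegral_ofReal (integrableOn_Ioi_rpow_of_lt hexp one_pos)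
      (ae_restrict_of_forall_mem measurableSet_Ioi fun t ht => rpow_nonneg
        (zero_le_one.trans (le_of_lt ht)) _), integral_Ioi_rpow_of_lt hexp one_pos, one_rpow,
      show -(finrank ℝ E / q) + 1 = -((finrank ℝ E - q) / q) by field_simp; ring,
      neg_div_neg_eq, one_div_div]
  calc ∫⁻ x, (‖f x‖ₑ / ‖x‖ₑ) ^ q ∂μ
      ≤ ∫⁻ x, (∫⁻ t in Ioi (1 : ℝ), ‖fderiv ℝ f (t • x)‖ₑ) ^ q ∂μ := by
        refine lintegral_mono_ae ?_
        filter_upwards [Measure.ae_ne μ 0] with x hx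
        gcongr
        exact ENNReal.div_le_of_le_mul' (enorm_le_lintegral_enorm_fderiv_smul hf hf0 hx)
    _ ≤ _ := by
        rw [← hweight]
        exact lintegral_rpow_lintegral_comp_smul_le μ hq measurableSet_Ioi
          (Ioi_subset_Ioi zero_le_one) (hf.continuous_fderiv one_ne_zero).enorm.measurable

end Hardy

section HomogeneousKernel

theorem integrableOn_Ioi_max_one_rpow_mul_rpow {a c : ℝ} (ha : -1 < a) (hac : a - c < -1) :
    IntegrableOn (fun t : ℝ => max 1 t ^ (-c) * t ^ a) (Ioi 0) := by
  rw [← Ioo_union_Ici_eq_Ioi one_pos]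
  refine IntegrableOn.union ?_ ?_
  · refine ((intervalIntegral.integrableOn_Ioo_rpow_iff one_pos).2 ha).congr_fun ?_
      measurableSet_Ioo
    intro t ht
    simp [max_eq_left ht.2.le]
  · rw [integrableOn_Ici_iff_integrableOn_Ioi]
    refine (integrableOn_Ioi_rpow_of_lt hac one_pos).congr_fun ?_ measurableSet_Ioi
    intro t ht
    have ht : 1 < t := ht
    simp only [max_eq_right ht.le]
    rw [← rpow_add (by positivity), neg_add_eq_sub]

variable {E : Type*} [NormedAddCommGroup E] [NormedSpace ℝ E]

/-- The kernel `|x|⁻ᵇ max(|x|, |y|)ᵇ⁻ⁿ`, homogeneous of degree `-n` on an `n`-dimensional space. -/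
def hardyKernel (b : ℝ) (x y : E) : ℝ≥0∞ :=
  ‖x‖ₑ ^ (-b) * max ‖x‖ₑ ‖y‖ₑ ^ (-(finrank ℝ E - b))

variable [MeasurableSpace E] [BorelSpace E]

theorem measurable_uncurry_hardyKernel (b : ℝ) :
    Measurable (uncurry (hardyKernel b : E → E → ℝ≥0∞)) := by
  unfold hardyKernel uncurry
  fun_prop

variable [FiniteDimensional ℝ E] (μ : Measure E) [μ.IsAddHaarMeasure]

theorem lintegral_max_one_enorm_rpow_mul_lt_top [Nontrivial E] {a c : ℝ}
    (ha : a < finrank ℝ E) (hac : finrank ℝ E < a + c) :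
    ∫⁻ z, max 1 ‖z‖ₑ ^ (-c) * ‖z‖ₑ ^ (-a) ∂μ < ⊤ := by
  have hint : Integrable (fun z : E => max 1 ‖z‖ ^ (-c) * ‖z‖ ^ (-a)) μ := by
    rw [integrable_fun_norm_addHaar μ (f := fun t => max 1 t ^ (-c) * t ^ (-a))]
    refine (integrableOn_Ioi_max_one_rpow_mul_rpow (a := finrank ℝ E - 1 - a) (c := c)
      (by linarith) (by linarith)).congr_fun (fun t ht => ?_) measurableSet_Ioi
    simp only
    rw [sub_eq_add_neg _ a, rpow_add ht, ← Nat.cast_pred finrank_pos, rpow_natCast, smul_eq_mul]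
    ring
  convert! hint.lintegral_lt_top using 1
  refine lintegral_congr_ae ?_
  filter_upwards [Measure.ae_ne μ 0] with z hz
  rw [← ENNReal.ofReal_one, ← ofReal_norm, ← ENNReal.ofReal_max,
    ENNReal.ofReal_rpow_of_pos (by positivity), ENNReal.ofReal_rpow_of_pos (by positivity),
    ← ENNReal.ofReal_mul (by positivity)]

theorem lintegral_max_enorm_rpow_mul_eq {x : E} (hx : x ≠ 0) (a c : ℝ) :
    ∫⁻ y, max ‖x‖ₑ ‖y‖ₑ ^ (-c) * ‖y‖ₑ ^ (-a) ∂μ =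
      ‖x‖ₑ ^ (finrank ℝ E - c - a) * ∫⁻ z, max 1 ‖z‖ₑ ^ (-c) * ‖z‖ₑ ^ (-a) ∂μ := by
  have hx0 : ‖x‖ₑ ≠ 0 := enorm_ne_zero.2 hx
  have hnx : 0 < ‖x‖ := norm_pos_iff.2 hx
  have hscale (y : E) : max ‖x‖ₑ ‖y‖ₑ ^ (-c) * ‖y‖ₑ ^ (-a) =
      ‖x‖ₑ ^ (-c - a) * (max 1 ‖‖x‖⁻¹ • y‖ₑ ^ (-c) * ‖‖x‖⁻¹ • y‖ₑ ^ (-a)) := by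
    obtain ⟨z, rfl⟩ : ∃ z, y = ‖x‖ • z := ⟨‖x‖⁻¹ • y, (smul_inv_smul₀ hnx.ne' y).symm⟩
    have : max ‖x‖ₑ (‖x‖ₑ * ‖z‖ₑ) = ‖x‖ₑ * max 1 ‖z‖ₑ := by rw [mul_max, mul_one]
    rw [inv_smul_smul₀ hnx.ne', enorm_smul, enorm_norm, this,
      ENNReal.mul_rpow_of_ne_top enorm_ne_top (by finiteness),
      ENNReal.mul_rpow_of_ne_top enorm_ne_top enorm_ne_top, sub_eq_add_neg,
      ENNReal.rpow_add _ _ hx0 enorm_ne_top]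
    ring
  simp_rw [hscale]
  rw [lintegral_const_mul _ (by fun_prop), lintegral_comp_smul μ (inv_pos.2 hnx)
      fun z => max 1 ‖z‖ₑ ^ (-c) * ‖z‖ₑ ^ (-a), inv_rpow hnx.le, rpow_neg hnx.le, inv_inv,
    ← ENNReal.ofReal_rpow_of_pos hnx, ofReal_norm, ← mul_assoc,
    ← ENNReal.rpow_add _ _ hx0 enorm_ne_top]
  congr 2
  ring

theorem lintegral_hardyKernel_mul_eq (b a : ℝ) {x : E} (hx : x ≠ 0) :
    ∫⁻ y, hardyKernel b x y * ‖y‖ₑ ^ (-a) ∂μ =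
      (∫⁻ z, max 1 ‖z‖ₑ ^ (-(finrank ℝ E - b)) * ‖z‖ₑ ^ (-a) ∂μ) * ‖x‖ₑ ^ (-a) := by
  simp_rw [hardyKernel, mul_assoc]
  rw [lintegral_const_mul _ (by fun_prop), lintegral_max_enorm_rpow_mul_eq μ hx, ← mul_assoc,
    ← ENNReal.rpow_add _ _ (enorm_ne_zero.2 hx) enorm_ne_top, mul_comm]
  congr 2
  ring

theorem lintegral_hardyKernel_mul_eq' (b a : ℝ) {y : E} (hy : y ≠ 0) :
    ∫⁻ x, hardyKernel b x y * ‖x‖ₑ ^ (-a) ∂μ =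
      (∫⁻ z, max 1 ‖z‖ₑ ^ (-(finrank ℝ E - b)) * ‖z‖ₑ ^ (-(a + b)) ∂μ) * ‖y‖ₑ ^ (-a) := by
  have : Nontrivial E := nontrivial_of_ne y 0 hy
  have hkernel : ∫⁻ x, hardyKernel b x y * ‖x‖ₑ ^ (-a) ∂μ =
      ∫⁻ x, max ‖y‖ₑ ‖x‖ₑ ^ (-(finrank ℝ E - b)) * ‖x‖ₑ ^ (-(a + b)) ∂μ := by
    refine lintegral_congr_ae ?_
    filter_upwards [Measure.ae_ne μ 0] with x hx
    rw [hardyKernel, max_comm, neg_add, ENNReal.rpow_add _ _ (enorm_ne_zero.2 hx) enorm_ne_top]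
    ring
  rw [hkernel, lintegral_max_enorm_rpow_mul_eq μ hy, mul_comm]
  congr 2
  ring

theorem exists_lintegral_rpow_hardyKernel_le [Nontrivial E] {b q : ℝ} (hq : 1 < q)
    (hb : b * q < finrank ℝ E) :
    ∃ C : ℝ≥0, ∀ g : E → ℝ≥0∞, Measurable g →
      ∫⁻ x, (∫⁻ y, hardyKernel b x y * g y ∂μ) ^ q ∂μ ≤ C * ∫⁻ y, g y ^ q ∂μ := by
  have hq0 : 0 < q := by positivity
  have hn : (0 : ℝ) < finrank ℝ E := Nat.cast_pos.2 finrank_pos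
  set a : ℝ := finrank ℝ E / q with a_def
  have haq : a * (q - 1) = finrank ℝ E - a := by rw [a_def]; field_simp
  have hba : b < a := (lt_div_iff₀ hq0).2 hb
  have han : a < finrank ℝ E := div_lt_self hn hq
  set C₁ := ∫⁻ z, max 1 ‖z‖ₑ ^ (-(finrank ℝ E - b)) * ‖z‖ₑ ^ (-a) ∂μ
  set C₂ := ∫⁻ z, max 1 ‖z‖ₑ ^ (-(finrank ℝ E - b)) * ‖z‖ₑ ^ (-(a * (q - 1) + b)) ∂μ
  have hC₁ : C₁ ≠ ⊤ := (lintegral_max_one_enorm_rpow_mul_lt_top μ han (by linarith)).ne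
  have hC₂ : C₂ ≠ ⊤ :=
    (lintegral_max_one_enorm_rpow_mul_lt_top μ (by linarith) (by linarith)).ne
  have hC : C₁ ^ (q - 1) * C₂ ≠ ⊤ := by finiteness
  refine ⟨(C₁ ^ (q - 1) * C₂).toNNReal, fun g hg => ?_⟩
  rw [ENNReal.coe_toNNReal hC]
  have hne : ∀ᵐ x : E ∂μ, x ≠ 0 := Measure.ae_ne μ 0
  refine lintegral_rpow_lintegral_mul_le_of_schur (v := fun x : E => ‖x‖ₑ ^ (-a))
    (w := fun y => ‖y‖ₑ ^ (-a)) hq.le (measurable_uncurry_hardyKernel b) (by fun_prop)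
    (by fun_prop) ?_ ?_ ?_ ?_ hg
  · exact hne.mono fun y hy => (ENNReal.rpow_pos (enorm_pos.2 hy) enorm_ne_top).ne'
  · exact hne.mono fun y hy => ENNReal.rpow_ne_top_of_ne_zero (enorm_ne_zero.2 hy) enorm_ne_top
  · exact hne.mono fun x hx => (lintegral_hardyKernel_mul_eq μ b a hx).le
  · simp_rw [← ENNReal.rpow_mul, neg_mul]
    exact hne.mono fun y hy => (lintegral_hardyKernel_mul_eq' μ b _ hy).le

end HomogeneousKernel

section DyadicSum

theorem two_zpow_ne_zero (j : ℤ) : (2 : ℝ≥0∞) ^ j ≠ 0 :=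
  (ENNReal.zpow_pos two_ne_zero ENNReal.ofNat_ne_top j).ne'

theorem two_zpow_ne_top (j : ℤ) : (2 : ℝ≥0∞) ^ j ≠ ⊤ :=
  ENNReal.zpow_ne_top two_ne_zero ENNReal.ofNat_ne_top j

theorem tsum_pow_natAbs_lt_top {ρ : ℝ≥0∞} (hρ : ρ < 1) : ∑' j : ℤ, ρ ^ j.natAbs < ⊤ := by
  have hgeom : ∑' n : ℕ, ρ ^ n < ⊤ := by
    rw [ENNReal.tsum_geometric]
    exact ENNReal.inv_lt_top.2 (tsub_pos_of_lt hρ)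
  rw [tsum_of_nat_of_neg_add_one ENNReal.summable ENNReal.summable]
  refine ENNReal.add_lt_top.2 ⟨hgeom, hgeom.trans_le' ?_⟩
  exact ENNReal.tsum_le_tsum fun n => pow_le_pow_right_of_le_one' hρ.le (by lia)

/-- The bump `t ↦ min(tᵝ, t⁻ᵝ)`, written as a product. -/
def dyadicBump (β : ℝ) (t : ℝ≥0∞) : ℝ≥0∞ :=
  t ^ β * max 1 t ^ (-(2 * β))

@[fun_prop]
theorem measurable_dyadicBump (β : ℝ) : Measurable (dyadicBump β) := by
  unfold dyadicBump
  fun_prop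

theorem dyadicBump_two_zpow (β : ℝ) (j : ℤ) :
    dyadicBump β (2 ^ j) = (2 ^ (-β)) ^ j.natAbs := by
  rw [dyadicBump]
  obtain ⟨n, rfl | rfl⟩ := j.eq_nat_or_neg
  · have : (1 : ℝ≥0∞) ≤ 2 ^ n := one_le_pow₀ ENNReal.one_lt_two.le
    rw [Int.natAbs_natCast, zpow_natCast, max_eq_right this,
      ← ENNReal.rpow_add _ _ (by simp) (by finiteness)]
    simp only [← ENNReal.rpow_natCast, ← ENNReal.rpow_mul]
    ring_nf
  · have : (2 : ℝ≥0∞) ^ (-(n : ℤ)) ≤ 1 := by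
      rw [ENNReal.zpow_neg, zpow_natCast, ENNReal.inv_le_one]
      exact one_le_pow₀ ENNReal.one_lt_two.le
    rw [max_eq_left this, ENNReal.one_rpow, mul_one, Int.natAbs_neg, Int.natAbs_natCast]
    simp only [← ENNReal.rpow_intCast, ← ENNReal.rpow_natCast, ← ENNReal.rpow_mul]
    push_cast
    ring_nf

theorem dyadicBump_rpow (β : ℝ) {r : ℝ} (hr : 0 ≤ r) (t : ℝ≥0∞) :
    dyadicBump β t ^ r = dyadicBump (β * r) t := by
  rw [dyadicBump, dyadicBump, ENNReal.mul_rpow_of_nonneg _ _ hr, ← ENNReal.rpow_mul,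
    ← ENNReal.rpow_mul, neg_mul, mul_assoc]

theorem dyadicBump_mul_le {β : ℝ} (hβ : 0 ≤ β) {s t : ℝ≥0∞} (hs : 1 ≤ s) :
    dyadicBump β (s * t) ≤ s ^ β * dyadicBump β t := by
  rw [dyadicBump, dyadicBump, ENNReal.mul_rpow_of_nonneg _ _ hβ, mul_assoc]
  gcongr _ * (_ * ?_)
  rw [ENNReal.rpow_neg, ENNReal.rpow_neg]
  gcongr
  exact le_mul_of_one_le_left' hs

theorem exists_tsum_dyadicBump_le {β : ℝ} (hβ : 0 < β) :
    ∃ C : ℝ≥0, ∀ t : ℝ≥0∞, t ≠ 0 → t ≠ ⊤ → ∑' j : ℤ, dyadicBump β (2 ^ j * t) ≤ C := by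
  have hρ : (2 : ℝ≥0∞) ^ (-β) < 1 :=
    ENNReal.rpow_lt_one_of_one_lt_of_neg ENNReal.one_lt_two (neg_lt_zero.2 hβ)
  have hC : 2 ^ β * ∑' j : ℤ, ((2 : ℝ≥0∞) ^ (-β)) ^ j.natAbs ≠ ⊤ :=
    ENNReal.mul_ne_top (by finiteness) (tsum_pow_natAbs_lt_top hρ).ne
  refine ⟨_, fun t ht0 ht => (?_ : _ ≤ _).trans (ENNReal.coe_toNNReal hC).ge⟩
  obtain ⟨k, hk1, hk2⟩ := ENNReal.exists_mem_Ico_zpow ht0 ht ENNReal.one_lt_two (by simp)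
  obtain ⟨s, rfl, hs1, hs2⟩ : ∃ s : ℝ≥0∞, s * 2 ^ k = t ∧ 1 ≤ s ∧ s ≤ 2 := by
    refine ⟨t / 2 ^ k, ENNReal.div_mul_cancel (two_zpow_ne_zero k) (two_zpow_ne_top k), ?_, ?_⟩
    · rwa [ENNReal.le_div_iff_mul_le (.inl (two_zpow_ne_zero k)) (.inl (two_zpow_ne_top k)),
        one_mul]
    · rw [ENNReal.zpow_add two_ne_zero ENNReal.ofNat_ne_top, zpow_one, mul_comm] at hk2
      exact ENNReal.div_le_of_le_mul hk2.le
  calc ∑' j : ℤ, dyadicBump β (2 ^ j * (s * 2 ^ k))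
      = ∑' j : ℤ, dyadicBump β (s * 2 ^ (j + k)) := by
        congr! 2 with j
        rw [ENNReal.zpow_add two_ne_zero ENNReal.ofNat_ne_top]
        ring_nf
    _ = ∑' j : ℤ, dyadicBump β (s * 2 ^ j) :=
        (Equiv.addRight k).tsum_eq fun j => dyadicBump β (s * 2 ^ j)
    _ ≤ ∑' j : ℤ, 2 ^ β * (2 ^ (-β)) ^ j.natAbs := by
        gcongr with j
        grw [dyadicBump_mul_le hβ.le hs1, hs2, dyadicBump_two_zpow]
    _ = _ := ENNReal.tsum_mul_left

theorem rpow_neg_eq_mul_dyadicBump (β : ℝ) {N t : ℝ≥0∞} (hN : N ≠ ⊤) (ht : t ≠ ⊤)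
    (hNt : 1 ≤ N * t) : N ^ (-β) = t ^ β * dyadicBump β (N * t) := by
  have hNt0 : N * t ≠ 0 := (zero_lt_one.trans_le hNt).ne'
  have ht0 : t ≠ 0 := right_ne_zero_of_mul hNt0
  rw [dyadicBump, max_eq_right hNt, ← ENNReal.rpow_add _ _ hNt0 (by finiteness),
    ENNReal.mul_rpow_of_ne_top hN ht, mul_left_comm, ← ENNReal.rpow_add _ _ ht0 ht]
  ring_nf
  simp

theorem rpow_mul_one_add_rpow_le_dyadicBump {β : ℝ} (hβ : 0 ≤ β) {N t u : ℝ≥0∞}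
    (hN : N ≠ ⊤) (ht0 : t ≠ 0) (ht : t ≠ ⊤) (hu : u ≠ ⊤) (hNt : N * t ≤ 1) :
    N ^ β * (1 + N * u) ^ (-(2 * β)) ≤ max t u ^ (-β) * dyadicBump β (N * max t u) := by
  have hm0 : max t u ≠ 0 := (ht0.bot_lt.trans_le (le_max_left t u)).ne'
  have hm : max t u ≠ ⊤ := by simp [ht, hu]
  have hle : max 1 (N * max t u) ≤ 1 + N * u := by
    rw [mul_max]
    exact max_le le_self_add (max_le (hNt.trans le_self_add) le_add_self)
  calc N ^ β * (1 + N * u) ^ (-(2 * β))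
      ≤ N ^ β * max 1 (N * max t u) ^ (-(2 * β)) := by
        rw [ENNReal.rpow_neg, ENNReal.rpow_neg]
        gcongr
    _ = max t u ^ (-β) * dyadicBump β (N * max t u) := by
        rw [dyadicBump, ENNReal.mul_rpow_of_ne_top hN hm, ← mul_assoc, mul_left_comm (_ ^ (-β)),
          ← ENNReal.rpow_add _ _ hm0 hm, neg_add_cancel, ENNReal.rpow_zero, mul_one]

end DyadicSum

section DyadicMultiplier

theorem exists_enorm_le_one_add_enorm_rpow {V F : Type*} [NormedAddCommGroup V] [NormedSpace ℝ V]
    [NormedAddCommGroup F] [NormedSpace ℝ F] (f : 𝓢(V, F)) (M : ℝ) :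
    ∃ C : ℝ≥0, ∀ x, ‖f x‖ₑ ≤ C * (1 + ‖x‖ₑ) ^ (-M) := by
  obtain ⟨k, hk⟩ := exists_nat_ge M
  refine ⟨(2 ^ k * (Finset.Iic (k, 0)).sup (fun m => SchwartzMap.seminorm ℝ m.1 m.2) f).toNNReal,
    fun x => ?_⟩
  have hdecay := SchwartzMap.one_add_le_sup_seminorm_apply (𝕜 := ℝ) (m := (k, 0)) le_rfl le_rfl f x
  rw [norm_iteratedFDeriv_zero, mul_comm] at hdecay
  have hone : (1 : ℝ≥0∞) ≤ 1 + ‖x‖ₑ := le_self_add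
  have hM : ((1 + ‖x‖ₑ) ^ k)⁻¹ ≤ (1 + ‖x‖ₑ) ^ (-M) := by
    rw [← ENNReal.rpow_natCast, ← ENNReal.rpow_neg]
    exact ENNReal.rpow_le_rpow_of_exponent_le hone (neg_le_neg hk)
  grw [← hM]
  rw [← div_eq_mul_inv, ENNReal.le_div_iff_mul_le (.inl (by positivity)) (.inl (by finiteness))]
  have hbase : 1 + ‖x‖ₑ = ENNReal.ofReal (1 + ‖x‖) := by
    rw [ENNReal.ofReal_add zero_le_one (norm_nonneg x), ENNReal.ofReal_one, ofReal_norm]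
  rw [hbase, ← ofReal_norm, ← ENNReal.ofReal_pow (by positivity),
    ← ENNReal.ofReal_mul (norm_nonneg _)]
  exact ENNReal.ofReal_le_ofReal hdecay

theorem hasTemperateGrowth_comp_smul {V F : Type*} [NormedAddCommGroup V] [NormedSpace ℝ V]
    [NormedAddCommGroup F] [NormedSpace ℝ F] (f : 𝓢(V, F)) (r : ℝ) :
    HasTemperateGrowth fun x => f (r • x) :=
  f.hasTemperateGrowth.comp (by fun_prop)

theorem enorm_two_zpow (j : ℤ) : ‖(2 : ℝ) ^ j‖ₑ = 2 ^ j := by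
  rw [enorm_eq_nnnorm, nnnorm_zpow, ENNReal.coe_zpow (by simp)]
  simp

variable {E : Type*} [NormedAddCommGroup E] [InnerProductSpace ℝ E] [FiniteDimensional ℝ E]
  [MeasurableSpace E] [BorelSpace E]

theorem fourierInv_comp_inv_smul {F : Type*} [NormedAddCommGroup F] [NormedSpace ℂ F]
    (g : E → F) {r : ℝ} (hr : 0 < r) (z : E) :
    𝓕⁻ (fun ξ => g (r⁻¹ • ξ)) z = r ^ finrank ℝ E • 𝓕⁻ g (r • z) := by
  simp only [fourierInv_eq]
  rw [← inv_inv (r ^ _), ← inv_pow, ← abs_of_pos (a := (r⁻¹ ^ _)⁻¹) (by positivity),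
    ← Measure.integral_comp_smul volume (fun ξ => 𝐞 (inner ℝ ξ (r • z)) • g ξ)]
  congr! 4 with ξ
  rw [real_inner_smul_left, real_inner_smul_right, inv_mul_cancel_left₀ hr.ne']

variable {F : Type*} [NormedAddCommGroup F] [NormedSpace ℂ F]

variable (F) in
/-- The Fourier multiplier `φ(2⁻ʲ D)` on Schwartz functions; for a Littlewood–Paley function `φ`
this is the projector `P_N` with `N = 2ʲ`. -/
def dyadicMultiplier (φ : E → ℂ) (j : ℤ) : 𝓢(E, F) →L[ℂ] 𝓢(E, F) :=
  SchwartzMap.fourierMultiplierCLM F fun ξ => φ ((2 : ℝ) ^ (-j) • ξ)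

/-- The kernel `2ʲⁿ (1 + 2ʲ|z|)⁻ᴹ` dominating the convolution kernel of `dyadicMultiplier`. -/
def dyadicKernel (M : ℝ) (j : ℤ) (z : E) : ℝ≥0∞ :=
  (2 ^ j) ^ finrank ℝ E * (1 + 2 ^ j * ‖z‖ₑ) ^ (-M)

theorem dyadicMultiplier_apply (φ : 𝓢(E, ℂ)) (j : ℤ) (f : 𝓢(E, F)) (x : E) :
    dyadicMultiplier F φ j f x = 𝓕⁻ (fun ξ => φ ((2 : ℝ) ^ (-j) • ξ) • 𝓕 (f : E → F) ξ) x := by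
  rw [dyadicMultiplier, SchwartzMap.fourierMultiplierCLM_apply, SchwartzMap.fourierInv_coe]
  congr! 1
  funext ξ
  rw [SchwartzMap.smulLeftCLM_apply_apply (hasTemperateGrowth_comp_smul φ _),
    SchwartzMap.fourier_coe]

variable [CompleteSpace F]

theorem fourierMultiplierCLM_apply_eq_integral (φ : 𝓢(E, ℂ)) (f : 𝓢(E, F)) (x : E) :
    SchwartzMap.fourierMultiplierCLM F φ f x = ∫ y, 𝓕⁻ φ (x - y) • f y := by
  have hconv : SchwartzMap.fourierMultiplierCLM F φ f =
      SchwartzMap.convolution (ContinuousLinearMap.lsmul ℂ ℂ) (𝓕⁻ φ) f := by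
    rw [SchwartzMap.fourierMultiplierCLM_apply, SchwartzMap.convolution]
    congr 1
    ext ξ
    simp [SchwartzMap.smulLeftCLM_apply_apply φ.hasTemperateGrowth]
  rw [hconv, SchwartzMap.convolution_apply, convolution_eq_swap]
  rfl

theorem exists_enorm_dyadicMultiplier_le (φ : 𝓢(E, ℂ)) (M : ℝ) :
    ∃ C : ℝ≥0, ∀ (j : ℤ) (f : 𝓢(E, F)) (x : E),
      ‖dyadicMultiplier F φ j f x‖ₑ ≤ C * ∫⁻ y, dyadicKernel M j (x - y) * ‖f y‖ₑ := by
  obtain ⟨C, hC⟩ := exists_enorm_le_one_add_enorm_rpow (𝓕⁻ φ) M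
  refine ⟨C, fun j f x => ?_⟩
  have h2j : (0 : ℝ) < 2 ^ j := by positivity
  let dilation : E ≃L[ℝ] E := .smulLeft (Units.mk0 ((2 : ℝ) ^ j)⁻¹ (by positivity))
  let φj : 𝓢(E, ℂ) := SchwartzMap.compCLMOfContinuousLinearEquiv ℂ dilation φ
  have hφj : (φj : E → ℂ) = fun ξ => φ (((2 : ℝ) ^ j)⁻¹ • ξ) := rfl
  have hkernel (z : E) : ‖𝓕⁻ φj z‖ₑ ≤ C * dyadicKernel M j z := by
    rw [SchwartzMap.fourierInv_coe, hφj, fourierInv_comp_inv_smul _ h2j, enorm_smul, enorm_pow,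
      enorm_two_zpow, ← SchwartzMap.fourierInv_coe]
    grw [hC]
    rw [enorm_smul, enorm_two_zpow, dyadicKernel, mul_left_comm]
  calc ‖dyadicMultiplier F φ j f x‖ₑ
      = ‖∫ y, 𝓕⁻ φj (x - y) • f y‖ₑ := by
        rw [← fourierMultiplierCLM_apply_eq_integral, hφj, dyadicMultiplier, zpow_neg]
    _ ≤ ∫⁻ y, ‖𝓕⁻ φj (x - y)‖ₑ * ‖f y‖ₑ := by
        simpa only [enorm_smul] using enorm_integral_le_lintegral_enorm fun y => 𝓕⁻ φj (x - y) • f y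
    _ ≤ ∫⁻ y, C * (dyadicKernel M j (x - y) * ‖f y‖ₑ) := by
        refine lintegral_mono fun y => ?_
        grw [hkernel, mul_assoc]
    _ = C * ∫⁻ y, dyadicKernel M j (x - y) * ‖f y‖ₑ :=
        lintegral_const_mul' _ _ ENNReal.coe_ne_top

end DyadicMultiplier

section LittlewoodPaley

variable {E : Type*} [NormedAddCommGroup E] [InnerProductSpace ℝ E]

/-- A Littlewood–Paley function: smooth, compactly supported away from the origin, with dilates
`ψ(2⁻ʲ ξ)` summing to `1` at every `ξ ≠ 0`. -/
structure IsLittlewoodPaley (ψ : E → ℂ) : Prop where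
  contDiff : ContDiff ℝ (⊤ : ℕ∞) ψ
  hasCompactSupport : HasCompactSupport ψ
  zero_notMem_tsupport : 0 ∉ tsupport ψ
  hasSum_one : ∀ ξ, ξ ≠ 0 → HasSum (fun j : ℤ => ψ ((2 : ℝ) ^ (-j) • ξ)) 1

theorem IsLittlewoodPaley.exists_schwartzMap {ψ : E → ℂ} (hψ : IsLittlewoodPaley ψ) :
    ∃ φ : 𝓢(E, ℂ), ⇑φ = ψ :=
  ⟨hψ.hasCompactSupport.toSchwartzMap hψ.contDiff, rfl⟩

theorem exists_schwartzMap_eq_norm_sq_pow_mul {φ : E → ℂ} (hφ : ContDiff ℝ (⊤ : ℕ∞) φ)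
    (hφc : HasCompactSupport φ) (hφ0 : 0 ∉ tsupport φ) (m : ℕ) :
    ∃ η : 𝓢(E, ℂ), φ = fun ξ => ((‖ξ‖ ^ 2 : ℝ) : ℂ) ^ m * η ξ := by
  have hsmooth : ContDiff ℝ (⊤ : ℕ∞) fun ξ => (((‖ξ‖ ^ 2 : ℝ) : ℂ) ^ m)⁻¹ * φ ξ := by
    refine contMDiff_iff_contDiff.1 (contMDiff_of_tsupport fun ξ hξ => ContDiffAt.contMDiffAt ?_)
    have hξ0 : ξ ≠ 0 := fun h => hφ0 (h ▸ tsupport_mul_subset_right hξ)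
    have hne : ((‖ξ‖ ^ 2 : ℝ) : ℂ) ^ m ≠ 0 := pow_ne_zero m (by simpa using hξ0)
    exact (ContDiffAt.inv ((Complex.ofRealCLM.contDiff.contDiffAt.comp ξ
      (contDiff_norm_sq ℝ).contDiffAt).pow m) hne).mul hφ.contDiffAt
  refine ⟨hφc.mul_left.toSchwartzMap hsmooth, funext fun ξ => ?_⟩
  by_cases hξ : ξ = 0
  · have hφξ : φ ξ = 0 := hξ ▸ image_eq_zero_of_notMem_tsupport hφ0
    exact hφξ.trans (mul_eq_zero_of_right _ (mul_eq_zero_of_right _ hφξ)).symm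
  · have hne : ((‖ξ‖ ^ 2 : ℝ) : ℂ) ^ m ≠ 0 := pow_ne_zero m (by simpa using hξ)
    exact (mul_inv_cancel_left₀ hne (φ ξ)).symm

theorem IsLittlewoodPaley.exists_tsum_enorm_le {ψ : E → ℂ} (hψ : IsLittlewoodPaley ψ) :
    ∃ C : ℝ≥0, ∀ ξ, ∑' j : ℤ, ‖ψ ((2 : ℝ) ^ (-j) • ξ)‖ₑ ≤ C := by
  obtain ⟨η, hη⟩ := exists_schwartzMap_eq_norm_sq_pow_mul hψ.contDiff hψ.hasCompactSupport
    hψ.zero_notMem_tsupport 1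
  obtain ⟨A, hA⟩ := exists_enorm_le_one_add_enorm_rpow η 3
  obtain ⟨B, hB⟩ := exists_tsum_dyadicBump_le one_pos
  have hbump (ξ : E) : ‖ψ ξ‖ₑ ≤ A * dyadicBump 1 ‖ξ‖ₑ := by
    have hnorm : ‖((‖ξ‖ ^ 2 : ℝ) : ℂ)‖ₑ = ‖ξ‖ₑ * ‖ξ‖ₑ := by
      rw [← ofReal_norm, Complex.norm_real, ofReal_norm, enorm_pow, enorm_norm, sq]
    calc ‖ψ ξ‖ₑ = ‖ξ‖ₑ * ‖ξ‖ₑ * ‖η ξ‖ₑ := by rw [hη, enorm_mul, pow_one, hnorm]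
      _ ≤ ‖ξ‖ₑ * (1 + ‖ξ‖ₑ) * (A * (1 + ‖ξ‖ₑ) ^ (-3 : ℝ)) := by
        grw [hA]
        gcongr
        exact le_add_self
      _ = A * (‖ξ‖ₑ * (1 + ‖ξ‖ₑ) ^ (-2 : ℝ)) := by
        rw [show (-2 : ℝ) = 1 + -3 by norm_num, ENNReal.rpow_add _ _ (by simp) (by finiteness),
          ENNReal.rpow_one]
        ring
      _ ≤ A * dyadicBump 1 ‖ξ‖ₑ := by
        rw [dyadicBump, ENNReal.rpow_one, mul_one, ENNReal.rpow_neg, ENNReal.rpow_neg]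
        gcongr
        exact max_le le_self_add le_add_self
  refine ⟨A * B, fun ξ => ?_⟩
  by_cases hξ : ξ = 0
  · simp [hξ, image_eq_zero_of_notMem_tsupport hψ.zero_notMem_tsupport]
  calc ∑' j : ℤ, ‖ψ ((2 : ℝ) ^ (-j) • ξ)‖ₑ
      = ∑' j : ℤ, ‖ψ ((2 : ℝ) ^ j • ξ)‖ₑ :=
        (Equiv.neg ℤ).tsum_eq fun j => ‖ψ ((2 : ℝ) ^ j • ξ)‖ₑ
    _ ≤ ∑' j : ℤ, A * dyadicBump 1 (2 ^ j * ‖ξ‖ₑ) := by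
        gcongr with j
        grw [hbump, enorm_smul, enorm_two_zpow]
    _ ≤ A * B := by
        rw [ENNReal.tsum_mul_left]
        grw [hB _ (enorm_ne_zero.2 hξ) enorm_ne_top]
    _ = (A * B : ℝ≥0) := (ENNReal.coe_mul A B).symm

variable [FiniteDimensional ℝ E]

theorem IsLittlewoodPaley.of_annulus {ψ : E → ℝ} {a b : ℝ} (ha : 0 < a)
    (hψ : ContDiff ℝ (⊤ : ℕ∞) ψ) (hsupp : support ψ ⊆ {ξ | a ≤ ‖ξ‖ ∧ ‖ξ‖ ≤ b})
    (hsum : ∀ ξ, ξ ≠ 0 → ∑' j : ℤ, ψ ((2 : ℝ) ^ (-j) • ξ) = 1) :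
    IsLittlewoodPaley fun ξ => (ψ ξ : ℂ) where
  contDiff := Complex.ofRealCLM.contDiff.comp hψ
  hasCompactSupport := by
    refine HasCompactSupport.intro (isCompact_closedBall (0 : E) b) fun ξ hξ => ?_
    by_contra h
    exact hξ (mem_closedBall_zero_iff.2 (hsupp (by simpa using h)).2)
  zero_notMem_tsupport := by
    have hclosed : IsClosed {ξ : E | a ≤ ‖ξ‖} := isClosed_le continuous_const continuous_norm
    have hsub : support (fun ξ => (ψ ξ : ℂ)) ⊆ {ξ : E | a ≤ ‖ξ‖} :=
      fun ξ hξ => (hsupp (by simpa using hξ)).1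
    exact fun h => ha.not_ge (by simpa using closure_minimal hsub hclosed h)
  hasSum_one ξ hξ := by
    have hsummable : Summable fun j : ℤ => ψ ((2 : ℝ) ^ (-j) • ξ) := by
      by_contra h
      exact zero_ne_one ((tsum_eq_zero_of_not_summable h).symm.trans (hsum ξ hξ))
    exact Complex.ofReal_one ▸ Complex.hasSum_ofReal.2 (hsum ξ hξ ▸ hsummable.hasSum)

theorem exists_schwartzMap_mul_eq {φ : E → ℂ} (hφ : HasCompactSupport φ) :
    ∃ χ : 𝓢(E, ℂ), ⇑χ * φ = φ := by
  obtain ⟨R, hR0, hR⟩ := hφ.isCompact.isBounded.subset_closedBall_lt 0 (0 : E)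
  let χ : ContDiffBump (0 : E) := ⟨R, R + 1, hR0, lt_add_one R⟩
  refine ⟨(χ.hasCompactSupport.comp_left Complex.ofReal_zero).toSchwartzMap
    (Complex.ofRealCLM.contDiff.comp χ.contDiff), ?_⟩
  funext ξ
  by_cases hξ : φ ξ = 0
  · simp [hξ]
  · have hχξ : χ ξ = 1 := χ.one_of_mem_closedBall (hR (subset_tsupport φ hξ))
    change (χ ξ : ℂ) * φ ξ = φ ξ
    rw [hχξ, Complex.ofReal_one, one_mul]

variable [MeasurableSpace E] [BorelSpace E]
  {F : Type*} [NormedAddCommGroup F] [NormedSpace ℂ F]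

theorem IsLittlewoodPaley.tsum_lintegral_enorm_smul_ne_top {ψ : E → ℂ}
    (hψ : IsLittlewoodPaley ψ) (g : 𝓢(E, F)) :
    ∑' j : ℤ, ∫⁻ ξ, ‖ψ ((2 : ℝ) ^ (-j) • ξ) • g ξ‖ₑ ≠ ⊤ := by
  obtain ⟨C, hC⟩ := hψ.exists_tsum_enorm_le
  obtain ⟨φ, rfl⟩ := hψ.exists_schwartzMap
  have hint : ∫⁻ ξ, ‖g ξ‖ₑ ≠ ⊤ := g.integrable.2.ne
  refine ne_top_of_le_ne_top (ENNReal.mul_ne_top (ENNReal.coe_ne_top (r := C)) hint) ?_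
  calc ∑' j : ℤ, ∫⁻ ξ, ‖φ ((2 : ℝ) ^ (-j) • ξ) • g ξ‖ₑ
      = ∫⁻ ξ, (∑' j : ℤ, ‖φ ((2 : ℝ) ^ (-j) • ξ)‖ₑ) * ‖g ξ‖ₑ := by
        simp_rw [enorm_smul, ← ENNReal.tsum_mul_right]
        exact (lintegral_tsum fun j => by fun_prop).symm
    _ ≤ ∫⁻ ξ, C * ‖g ξ‖ₑ := by
        gcongr with ξ
        exact hC ξ
    _ = C * ∫⁻ ξ, ‖g ξ‖ₑ := lintegral_const_mul' _ _ ENNReal.coe_ne_top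

variable [CompleteSpace F]

theorem dyadicMultiplier_dyadicMultiplier (φ χ : 𝓢(E, ℂ)) (j : ℤ) (f : 𝓢(E, F)) :
    dyadicMultiplier F φ j (dyadicMultiplier F χ j f) = dyadicMultiplier F (⇑φ * ⇑χ) j f :=
  SchwartzMap.fourierMultiplierCLM_fourierMultiplierCLM_apply (hasTemperateGrowth_comp_smul φ _)
    (hasTemperateGrowth_comp_smul χ _) f

theorem exists_enorm_dyadicMultiplier_le_self {φ : 𝓢(E, ℂ)} (hφ : HasCompactSupport φ) (M : ℝ) :
    ∃ C : ℝ≥0, ∀ (j : ℤ) (f : 𝓢(E, F)) (x : E), ‖dyadicMultiplier F φ j f x‖ₑ ≤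
      C * ∫⁻ y, dyadicKernel M j (x - y) * ‖dyadicMultiplier F φ j f y‖ₑ := by
  obtain ⟨χ, hχ⟩ := exists_schwartzMap_mul_eq hφ
  obtain ⟨C, hC⟩ := exists_enorm_dyadicMultiplier_le (F := F) χ M
  refine ⟨C, fun j f x => ?_⟩
  simpa only [dyadicMultiplier_dyadicMultiplier, hχ] using hC j (dyadicMultiplier F φ j f) x

theorem IsLittlewoodPaley.enorm_le_tsum_enorm_dyadicMultiplier [Nontrivial E] {ψ : E → ℂ}
    (hψ : IsLittlewoodPaley ψ) (f : 𝓢(E, F)) (x : E) :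
    ‖f x‖ₑ ≤ ∑' j, ‖dyadicMultiplier F ψ j f x‖ₑ := by
  have hfin := hψ.tsum_lintegral_enorm_smul_ne_top (𝓕 f)
  obtain ⟨φ, rfl⟩ := hψ.exists_schwartzMap
  let G (j : ℤ) (ξ : E) : F := 𝐞 (inner ℝ ξ x) • φ ((2 : ℝ) ^ (-j) • ξ) • 𝓕 f ξ
  have hG (j : ℤ) : dyadicMultiplier F φ j f x = ∫ ξ, G j ξ := by
    rw [dyadicMultiplier_apply, fourierInv_eq, ← SchwartzMap.fourier_coe]
  have hGcont (j : ℤ) : Continuous (G j) := by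
    have hchar : Continuous fun ξ : E => 𝐞 (inner ℝ ξ x) :=
      continuous_fourierChar.comp (by fun_prop)
    exact hchar.smul ((φ.continuous.comp (by fun_prop)).smul (𝓕 f).continuous)
  have hGfin : ∑' j, ∫⁻ ξ, ‖G j ξ‖ₑ ≠ ⊤ := by
    simpa only [G, ← ofReal_norm, Circle.norm_smul] using hfin
  have hGsum : ∀ᵐ ξ, ∑' j, G j ξ = 𝐞 (inner ℝ ξ x) • 𝓕 f ξ := by
    filter_upwards [Measure.ae_ne volume 0] with ξ hξ
    have := ((hψ.hasSum_one ξ hξ).smul_const (𝓕 f ξ)).const_smul (𝐞 (inner ℝ ξ x))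
    simpa only [one_smul] using this.tsum_eq
  calc ‖f x‖ₑ = ‖∑' j, dyadicMultiplier F φ j f x‖ₑ := by
        simp_rw [hG]
        rw [← integral_tsum (fun j => (hGcont j).aestronglyMeasurable) hGfin,
          integral_congr_ae hGsum, ← fourierInv_eq, ← SchwartzMap.fourierInv_coe,
          fourierInv_fourier_eq]
    _ ≤ ∑' j, ‖dyadicMultiplier F φ j f x‖ₑ := enorm_tsum_le_tsum_enorm

end LittlewoodPaley

section DyadicHardy

variable {E : Type*} [NormedAddCommGroup E] [InnerProductSpace ℝ E]

theorem two_zpow_rpow_neg_mul_dyadicKernel_le {s : ℝ} (hs : s ≤ finrank ℝ E) {j : ℤ} {x : E}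
    (hx : x ≠ 0) (hjx : 2 ^ j * ‖x‖ₑ ≤ 1) (y : E) :
    (2 ^ j) ^ (-s) * dyadicKernel (2 * (finrank ℝ E - s)) j (x - y) ≤
      2 ^ (2 * (finrank ℝ E - s)) * (max ‖x‖ₑ ‖y‖ₑ ^ (-(finrank ℝ E - s)) *
        dyadicBump (finrank ℝ E - s) (2 ^ j * max ‖x‖ₑ ‖y‖ₑ)) := by
  set β : ℝ := finrank ℝ E - s
  have hβ : 0 ≤ β := sub_nonneg.2 hs
  have hweight : (1 + 2 ^ j * ‖x - y‖ₑ) ^ (-(2 * β)) ≤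
      2 ^ (2 * β) * (1 + 2 ^ j * ‖y‖ₑ) ^ (-(2 * β)) := by
    have hy : ‖y‖ₑ ≤ ‖x‖ₑ + ‖x - y‖ₑ := by simpa using enorm_sub_le (a := x) (b := x - y)
    have hle : 1 + 2 ^ j * ‖y‖ₑ ≤ 2 * (1 + 2 ^ j * ‖x - y‖ₑ) := by
      grw [hy, mul_add, hjx, mul_add, mul_one, ← add_assoc, one_add_one_eq_two]
      gcongr 2 + ?_
      exact le_mul_of_one_le_left' ENNReal.one_lt_two.le
    rw [ENNReal.rpow_neg, ENNReal.rpow_neg, ← div_eq_mul_inv,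
      ENNReal.le_div_iff_mul_le (by simp) (by simp), mul_comm, ← div_eq_mul_inv]
    refine ENNReal.div_le_of_le_mul ?_
    rw [← ENNReal.mul_rpow_of_nonneg _ _ (by positivity)]
    gcongr
  calc (2 ^ j) ^ (-s) * dyadicKernel (2 * β) j (x - y)
      = (2 ^ j) ^ β * (1 + 2 ^ j * ‖x - y‖ₑ) ^ (-(2 * β)) := by
        rw [dyadicKernel, ← mul_assoc, ← ENNReal.rpow_natCast,
          ← ENNReal.rpow_add _ _ (two_zpow_ne_zero j) (two_zpow_ne_top j),
          neg_add_eq_sub]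
    _ ≤ 2 ^ (2 * β) * ((2 ^ j) ^ β * (1 + 2 ^ j * ‖y‖ₑ) ^ (-(2 * β))) := by
        grw [hweight, mul_left_comm]
    _ ≤ _ := by
        grw [rpow_mul_one_add_rpow_le_dyadicBump hβ (two_zpow_ne_top j) (enorm_ne_zero.2 hx)
          enorm_ne_top enorm_ne_top hjx]

variable [FiniteDimensional ℝ E] [MeasurableSpace E] [BorelSpace E]
  {F : Type*} [NormedAddCommGroup F] [NormedSpace ℂ F]

/-- The function `sup_N Nˢ |P_N f|`, whose `L^q` norm is the norm of `f` in `Ḟ^s_{q,∞}`. -/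
def dyadicSup (s : ℝ) (ψ : E → ℂ) (f : 𝓢(E, F)) (x : E) : ℝ≥0∞ :=
  ⨆ j : ℤ, (2 ^ j) ^ s * ‖dyadicMultiplier F ψ j f x‖ₑ

theorem measurable_dyadicSup (s : ℝ) (ψ : E → ℂ) (f : 𝓢(E, F)) :
    Measurable (dyadicSup s ψ f) :=
  .iSup fun j => (dyadicMultiplier F ψ j f).continuous.enorm.measurable.const_mul _

theorem enorm_dyadicMultiplier_le_dyadicSup (s : ℝ) (ψ : E → ℂ) (j : ℤ) (f : 𝓢(E, F)) (x : E) :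
    ‖dyadicMultiplier F ψ j f x‖ₑ ≤ (2 ^ j) ^ (-s) * dyadicSup s ψ f x := by
  calc ‖dyadicMultiplier F ψ j f x‖ₑ
      = (2 ^ j) ^ (-s) * ((2 ^ j) ^ s * ‖dyadicMultiplier F ψ j f x‖ₑ) := by
        rw [← mul_assoc, ← ENNReal.rpow_add _ _ (two_zpow_ne_zero j) (two_zpow_ne_top j),
          neg_add_cancel, ENNReal.rpow_zero, one_mul]
    _ ≤ (2 ^ j) ^ (-s) * dyadicSup s ψ f x := by
        gcongr
        exact le_iSup (fun j => (2 ^ j) ^ s * ‖dyadicMultiplier F ψ j f x‖ₑ) j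

variable [CompleteSpace F]

theorem exists_enorm_dyadicMultiplier_le_dyadicBump {φ : 𝓢(E, ℂ)} (hφ : HasCompactSupport φ)
    {s : ℝ} (hs : s ≤ finrank ℝ E) :
    ∃ C : ℝ≥0, ∀ (j : ℤ) (f : 𝓢(E, F)) (x : E), x ≠ 0 → ‖dyadicMultiplier F φ j f x‖ₑ ≤
      ‖x‖ₑ ^ s * dyadicBump s (2 ^ j * ‖x‖ₑ) * dyadicSup s φ f x +
        C * ∫⁻ y, max ‖x‖ₑ ‖y‖ₑ ^ (-(finrank ℝ E - s)) *
          dyadicBump (finrank ℝ E - s) (2 ^ j * max ‖x‖ₑ ‖y‖ₑ) * dyadicSup s φ f y := by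
  set β : ℝ := finrank ℝ E - s
  obtain ⟨C, hC⟩ := exists_enorm_dyadicMultiplier_le_self (F := F) hφ (2 * β)
  have h2β : (2 : ℝ≥0∞) ^ (2 * β) ≠ ⊤ := by finiteness
  refine ⟨C * ((2 : ℝ≥0∞) ^ (2 * β)).toNNReal, fun j f x hx => ?_⟩
  rcases le_total 1 (2 ^ j * ‖x‖ₑ) with hjx | hjx
  · refine le_add_of_le_left ?_
    rw [← rpow_neg_eq_mul_dyadicBump s (two_zpow_ne_top j) enorm_ne_top hjx]
    exact enorm_dyadicMultiplier_le_dyadicSup s φ j f x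
  · refine le_add_of_le_right ((hC j f x).trans ?_)
    rw [ENNReal.coe_mul, ENNReal.coe_toNNReal h2β, mul_assoc, ← lintegral_const_mul' _ _ h2β]
    gcongr _ * ?_
    refine lintegral_mono fun y => ?_
    grw [enorm_dyadicMultiplier_le_dyadicSup s φ j f y, ← mul_assoc, ← mul_assoc,
      mul_comm _ ((2 ^ j) ^ (-s)), two_zpow_rpow_neg_mul_dyadicKernel_le hs hx hjx y]

theorem IsLittlewoodPaley.exists_enorm_le_dyadicSup [Nontrivial E] {ψ : E → ℂ}
    (hψ : IsLittlewoodPaley ψ) {s : ℝ} (hs0 : 0 < s) (hs : s < finrank ℝ E) :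
    ∃ C : ℝ≥0, ∀ (f : 𝓢(E, F)) (x : E), x ≠ 0 → ‖f x‖ₑ ≤ C * (‖x‖ₑ ^ s * dyadicSup s ψ f x +
      ∫⁻ y, max ‖x‖ₑ ‖y‖ₑ ^ (-(finrank ℝ E - s)) * dyadicSup s ψ f y) := by
  obtain ⟨φ, rfl⟩ := hψ.exists_schwartzMap
  obtain ⟨A, hA⟩ := exists_enorm_dyadicMultiplier_le_dyadicBump (F := F) hψ.hasCompactSupport hs.le
  obtain ⟨B₁, hB₁⟩ := exists_tsum_dyadicBump_le hs0
  obtain ⟨B₂, hB₂⟩ := exists_tsum_dyadicBump_le (sub_pos.2 hs)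
  refine ⟨B₁ + A * B₂, fun f x hx => ?_⟩
  set S := dyadicSup s φ f
  have hS : Measurable S := measurable_dyadicSup s φ f
  set β : ℝ := finrank ℝ E - s
  let m (y : E) : ℝ≥0∞ := max ‖x‖ₑ ‖y‖ₑ
  have hm0 (y : E) : m y ≠ 0 := ((enorm_pos.2 hx).trans_le (le_max_left _ _)).ne'
  have hm_top (y : E) : m y ≠ ⊤ := by simp [m]
  calc ‖f x‖ₑ ≤ ∑' j, ‖dyadicMultiplier F φ j f x‖ₑ :=
        hψ.enorm_le_tsum_enorm_dyadicMultiplier f x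
    _ ≤ ∑' j : ℤ, (‖x‖ₑ ^ s * dyadicBump s (2 ^ j * ‖x‖ₑ) * S x +
          A * ∫⁻ y, m y ^ (-β) * dyadicBump β (2 ^ j * m y) * S y) := by
        gcongr with j
        exact hA j f x hx
    _ = ‖x‖ₑ ^ s * (∑' j : ℤ, dyadicBump s (2 ^ j * ‖x‖ₑ)) * S x +
          A * ∫⁻ y, m y ^ (-β) * (∑' j : ℤ, dyadicBump β (2 ^ j * m y)) * S y := by
        simp_rw [ENNReal.tsum_add, ← ENNReal.tsum_mul_left, ← ENNReal.tsum_mul_right]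
        rw [lintegral_tsum fun j => by fun_prop, ENNReal.tsum_mul_left]
    _ ≤ ‖x‖ₑ ^ s * B₁ * S x + A * ∫⁻ y, B₂ * (m y ^ (-β) * S y) := by
        grw [hB₁ _ (enorm_ne_zero.2 hx) enorm_ne_top]
        gcongr _ + _ * ?_
        refine lintegral_mono fun y => ?_
        grw [hB₂ _ (hm0 y) (hm_top y), mul_right_comm, mul_comm]
    _ = B₁ * (‖x‖ₑ ^ s * S x) + A * B₂ * ∫⁻ y, m y ^ (-β) * S y := by
        rw [lintegral_const_mul' _ _ ENNReal.coe_ne_top]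
        ring
    _ ≤ _ := by
        push_cast
        rw [mul_add]
        gcongr
        · exact le_self_add
        · exact le_add_self

theorem IsLittlewoodPaley.exists_enorm_div_le_dyadicSup [Nontrivial E] {ψ : E → ℂ}
    (hψ : IsLittlewoodPaley ψ) {s : ℝ} (hs0 : 0 < s) (hs : s < finrank ℝ E) :
    ∃ C : ℝ≥0, ∀ (f : 𝓢(E, F)) (x : E), x ≠ 0 → ‖f x‖ₑ / ‖x‖ₑ ^ s ≤
      C * (dyadicSup s ψ f x + ∫⁻ y, hardyKernel s x y * dyadicSup s ψ f y) := by
  obtain ⟨C, hC⟩ := hψ.exists_enorm_le_dyadicSup (F := F) hs0 hs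
  refine ⟨C, fun f x hx => ENNReal.div_le_of_le_mul ((hC f x hx).trans_eq ?_)⟩
  have hS : Measurable (dyadicSup s ψ f) := measurable_dyadicSup s ψ f
  have hxs : ‖x‖ₑ ^ s * ‖x‖ₑ ^ (-s) = 1 := by
    rw [← ENNReal.rpow_add _ _ (enorm_ne_zero.2 hx) enorm_ne_top, add_neg_cancel, ENNReal.rpow_zero]
  simp_rw [hardyKernel, mul_assoc (‖x‖ₑ ^ (-s))]
  rw [lintegral_const_mul _ (by fun_prop), mul_assoc, mul_comm _ (‖x‖ₑ ^ s),
    mul_add (‖x‖ₑ ^ s), ← mul_assoc (‖x‖ₑ ^ s) (‖x‖ₑ ^ (-s)), hxs, one_mul]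

theorem IsLittlewoodPaley.exists_lintegral_enorm_div_rpow_le_dyadicSup [Nontrivial E] {ψ : E → ℂ}
    (hψ : IsLittlewoodPaley ψ) {s q : ℝ} (hs : 0 < s) (hq : 1 < q) (hsq : s * q < finrank ℝ E) :
    ∃ C : ℝ≥0, ∀ f : 𝓢(E, F), ∫⁻ x, (‖f x‖ₑ / ‖x‖ₑ ^ s) ^ q ≤
      C * ∫⁻ x, dyadicSup s ψ f x ^ q := by
  have hsn : s < finrank ℝ E := (lt_mul_of_one_lt_right hs hq).trans hsq
  obtain ⟨A, hA⟩ := hψ.exists_enorm_div_le_dyadicSup (F := F) hs hsn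
  obtain ⟨B, hB⟩ := exists_lintegral_rpow_hardyKernel_le (volume : Measure E) hq hsq
  refine ⟨A ^ q * 2 ^ (q - 1) * (1 + B), fun f => ?_⟩
  have hq0 : 0 ≤ q := by positivity
  set S := dyadicSup s ψ f
  have hS : Measurable S := measurable_dyadicSup s ψ f
  calc ∫⁻ x, (‖f x‖ₑ / ‖x‖ₑ ^ s) ^ q
      ≤ ∫⁻ x, A ^ q * 2 ^ (q - 1) * (S x ^ q + (∫⁻ y, hardyKernel s x y * S y) ^ q) := by
        refine lintegral_mono_ae ?_
        filter_upwards [Measure.ae_ne volume 0] with x hx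
        grw [hA f x hx, ENNReal.mul_rpow_of_nonneg _ _ hq0,
          ENNReal.rpow_add_le_mul_rpow_add_rpow _ _ hq.le, mul_assoc]
    _ = A ^ q * 2 ^ (q - 1) *
          ((∫⁻ x, S x ^ q) + ∫⁻ x, (∫⁻ y, hardyKernel s x y * S y) ^ q) := by
        rw [lintegral_const_mul' _ _ (by finiteness), lintegral_add_left (hS.pow_const q)]
    _ ≤ A ^ q * 2 ^ (q - 1) * ((∫⁻ x, S x ^ q) + B * ∫⁻ x, S x ^ q) := by
        grw [hB S hS]
    _ = _ := by
        rw [ENNReal.coe_mul, ENNReal.coe_mul, ENNReal.coe_rpow_of_nonneg _ hq0,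
          ENNReal.coe_rpow_of_ne_zero two_ne_zero]
        push_cast
        ring

end DyadicHardy

section DyadicDecay

theorem lintegral_one_add_enorm_rpow_lt_top {E : Type*} [NormedAddCommGroup E] [NormedSpace ℝ E]
    [FiniteDimensional ℝ E] [MeasurableSpace E] [BorelSpace E] (μ : Measure E) [μ.IsAddHaarMeasure]
    {M : ℝ} (hM : finrank ℝ E < M) : ∫⁻ x, (1 + ‖x‖ₑ) ^ (-M) ∂μ < ⊤ := by
  convert finite_integral_one_add_norm (μ := μ) hM using 3 with x
  rw [← ENNReal.ofReal_rpow_of_pos (by positivity), ENNReal.ofReal_add zero_le_one (norm_nonneg x),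
    ENNReal.ofReal_one, ofReal_norm]

theorem min_one_mul_one_add_enorm_le {E : Type*} [NormedAddCommGroup E] (N : ℝ≥0∞) (x y : E) :
    min 1 N * (1 + ‖x‖ₑ) ≤ (1 + N * ‖x - y‖ₑ) * (1 + ‖y‖ₑ) := by
  calc min 1 N * (1 + ‖x‖ₑ) ≤ min 1 N * (1 + (‖x - y‖ₑ + ‖y‖ₑ)) := by
        gcongr
        simpa using enorm_add_le (x - y) y
    _ = min 1 N + min 1 N * ‖x - y‖ₑ + min 1 N * ‖y‖ₑ := by ring
    _ ≤ 1 + N * ‖x - y‖ₑ + (1 + N * ‖x - y‖ₑ) * ‖y‖ₑ := by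
        gcongr
        · exact min_le_left _ _
        · exact min_le_right _ _
        · exact (min_le_left _ _).trans le_self_add
    _ = (1 + N * ‖x - y‖ₑ) * (1 + ‖y‖ₑ) := by ring

theorem one_add_mul_enorm_rpow_mul_one_add_enorm_rpow_le {E : Type*} [NormedAddCommGroup E]
    {a : ℝ} (ha : 0 ≤ a) (b : ℝ) {N : ℝ≥0∞} (hN : N ≠ ⊤) (x y : E) :
    (1 + N * ‖x - y‖ₑ) ^ (-(a + b)) * (1 + ‖y‖ₑ) ^ (-(a + b)) ≤
      (min 1 N * (1 + ‖x‖ₑ)) ^ (-a) * ((1 + N * ‖x - y‖ₑ) ^ (-b) * (1 + ‖y‖ₑ) ^ (-b)) := by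
  calc (1 + N * ‖x - y‖ₑ) ^ (-(a + b)) * (1 + ‖y‖ₑ) ^ (-(a + b))
      = ((1 + N * ‖x - y‖ₑ) * (1 + ‖y‖ₑ)) ^ (-a) *
          ((1 + N * ‖x - y‖ₑ) ^ (-b) * (1 + ‖y‖ₑ) ^ (-b)) := by
        rw [neg_add, ENNReal.rpow_add _ _ (by simp) (by finiteness),
          ENNReal.rpow_add _ _ (by simp) (by finiteness),
          ENNReal.mul_rpow_of_ne_top (by finiteness) (by finiteness), mul_mul_mul_comm]
    _ ≤ _ := by
        rw [ENNReal.rpow_neg _ a, ENNReal.rpow_neg _ a]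
        gcongr (?_ ^ a)⁻¹ * _
        exact min_one_mul_one_add_enorm_le N x y

variable {E : Type*} [NormedAddCommGroup E] [InnerProductSpace ℝ E] [FiniteDimensional ℝ E]
  [MeasurableSpace E] [BorelSpace E]

theorem lintegral_dyadicKernel (M : ℝ) (j : ℤ) :
    ∫⁻ z : E, dyadicKernel M j z = ∫⁻ z : E, (1 + ‖z‖ₑ) ^ (-M) := by
  have h2j : (0 : ℝ) < 2 ^ j := by positivity
  have hcancel : ((2 : ℝ≥0∞) ^ j) ^ finrank ℝ E *
      ENNReal.ofReal (((2 : ℝ) ^ j) ^ (-(finrank ℝ E : ℝ))) = 1 := by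
    rw [← enorm_two_zpow, ← ofReal_norm, Real.norm_of_nonneg h2j.le,
      ← ENNReal.ofReal_pow h2j.le, ← ENNReal.ofReal_mul (by positivity), ← rpow_natCast,
      ← rpow_add h2j, add_neg_cancel, rpow_zero, ENNReal.ofReal_one]
  have hdilate := lintegral_comp_smul (volume : Measure E) h2j fun z => (1 + ‖z‖ₑ) ^ (-M)
  simp only [enorm_smul, enorm_two_zpow] at hdilate
  simp_rw [dyadicKernel]
  rw [lintegral_const_mul _ (by fun_prop), hdilate, ← mul_assoc, hcancel, one_mul]

theorem lintegral_dyadicKernel_mul_one_add_enorm_rpow_le (j : ℤ) (x : E) :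
    ∫⁻ y, dyadicKernel (finrank ℝ E + (finrank ℝ E + 1)) j (x - y) *
        (1 + ‖y‖ₑ) ^ (-(finrank ℝ E + (finrank ℝ E + 1) : ℝ)) ≤
      (∫⁻ y : E, (1 + ‖y‖ₑ) ^ (-(finrank ℝ E + 1 : ℝ))) * (1 + ‖x‖ₑ) ^ (-(finrank ℝ E : ℝ)) := by
  set n : ℝ := (finrank ℝ E : ℝ)
  have hle_one (t : ℝ≥0∞) : (1 + t) ^ (-(n + 1)) ≤ 1 := by
    rw [ENNReal.rpow_neg, ENNReal.inv_le_one]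
    exact ENNReal.one_le_rpow le_self_add (by positivity)
  have hpointwise (y : E) := one_add_mul_enorm_rpow_mul_one_add_enorm_rpow_le
    (Nat.cast_nonneg (finrank ℝ E)) (n + 1) (two_zpow_ne_top j) x y
  rw [mul_comm, ← lintegral_const_mul _ (by fun_prop)]
  rcases le_total ((2 : ℝ≥0∞) ^ j) 1 with hj | hj
  · refine lintegral_mono fun y => ?_
    rw [dyadicKernel, mul_assoc]
    grw [hpointwise y, hle_one, one_mul]
    rw [min_eq_right hj, ENNReal.mul_rpow_of_ne_top (two_zpow_ne_top j) (by finiteness),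
      ← mul_assoc, ← mul_assoc, ← ENNReal.rpow_natCast,
      ← ENNReal.rpow_add _ _ (two_zpow_ne_zero j) (two_zpow_ne_top j), add_neg_cancel,
      ENNReal.rpow_zero, one_mul]
  · rw [lintegral_const_mul _ (by fun_prop), ← lintegral_dyadicKernel _ j,
      ← lintegral_sub_left_eq_self (dyadicKernel _ j) x, ← lintegral_const_mul' _ _ (by finiteness)]
    refine lintegral_mono fun y => ?_
    rw [dyadicKernel, mul_assoc]
    grw [hpointwise y, hle_one ‖y‖ₑ]
    rw [min_eq_left hj, one_mul, mul_one, dyadicKernel, mul_left_comm]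

variable {F : Type*} [NormedAddCommGroup F] [NormedSpace ℂ F] [CompleteSpace F]

theorem dyadicMultiplier_norm_sq_pow_mul (m : ℕ) (η : 𝓢(E, ℂ)) (j : ℤ) (f : 𝓢(E, F)) :
    dyadicMultiplier F (fun ξ => ((‖ξ‖ ^ 2 : ℝ) : ℂ) ^ m * η ξ) j f =
      ((((2 : ℝ) ^ (-j)) ^ 2 : ℝ) : ℂ) ^ m • dyadicMultiplier F η j
        (SchwartzMap.fourierMultiplierCLM F (fun ξ => ((‖ξ‖ ^ 2 : ℝ) : ℂ) ^ m) f) := by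
  have hη := hasTemperateGrowth_comp_smul η ((2 : ℝ) ^ (-j))
  have hnorm : HasTemperateGrowth fun ξ : E => ((‖ξ‖ ^ 2 : ℝ) : ℂ) ^ m :=
    (Complex.ofRealCLM.hasTemperateGrowth.comp (hasTemperateGrowth_norm_sq E)).pow m
  rw [dyadicMultiplier, dyadicMultiplier,
    SchwartzMap.fourierMultiplierCLM_fourierMultiplierCLM_apply hη hnorm,
    ← smul_apply, ← SchwartzMap.fourierMultiplierCLM_smul (hη.mul hnorm)]
  congr! 2
  funext ξ
  simp only [norm_smul, Pi.smul_apply, Pi.mul_apply, smul_eq_mul, norm_zpow, Real.norm_ofNat]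
  push_cast
  ring

theorem exists_enorm_dyadicMultiplier_le_one_add_enorm_rpow (φ : 𝓢(E, ℂ)) (f : 𝓢(E, F)) :
    ∃ C : ℝ≥0, ∀ (j : ℤ) (x : E),
      ‖dyadicMultiplier F φ j f x‖ₑ ≤ C * (1 + ‖x‖ₑ) ^ (-(finrank ℝ E : ℝ)) := by
  set M : ℝ := finrank ℝ E + (finrank ℝ E + 1)
  obtain ⟨A, hA⟩ := exists_enorm_dyadicMultiplier_le (F := F) φ M
  obtain ⟨B, hB⟩ := exists_enorm_le_one_add_enorm_rpow f M
  have hfin := (lintegral_one_add_enorm_rpow_lt_top (volume : Measure E) (lt_add_one _)).ne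
  refine ⟨A * (B * (∫⁻ y : E, (1 + ‖y‖ₑ) ^ (-(finrank ℝ E + 1 : ℝ))).toNNReal), fun j x => ?_⟩
  calc ‖dyadicMultiplier F φ j f x‖ₑ ≤ A * ∫⁻ y, dyadicKernel M j (x - y) * ‖f y‖ₑ := hA j f x
    _ ≤ A * ∫⁻ y, B * (dyadicKernel M j (x - y) * (1 + ‖y‖ₑ) ^ (-M)) := by
        gcongr (A : ℝ≥0∞) * ?_
        refine lintegral_mono fun y => ?_
        grw [hB y, mul_left_comm]
    _ = A * (B * ∫⁻ y, dyadicKernel M j (x - y) * (1 + ‖y‖ₑ) ^ (-M)) := by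
        rw [lintegral_const_mul' _ _ ENNReal.coe_ne_top]
    _ ≤ _ := by
        grw [lintegral_dyadicKernel_mul_one_add_enorm_rpow_le j x]
        rw [ENNReal.coe_mul, ENNReal.coe_mul, ENNReal.coe_toNNReal hfin, mul_assoc, mul_assoc]

theorem exists_two_zpow_rpow_mul_enorm_dyadicMultiplier_le {φ : E → ℂ}
    (hφ : ContDiff ℝ (⊤ : ℕ∞) φ) (hφc : HasCompactSupport φ) (hφ0 : 0 ∉ tsupport φ) (s : ℝ)
    (f : 𝓢(E, F)) :
    ∃ C : ℝ≥0, ∀ (j : ℤ) (x : E), (2 ^ j) ^ s * ‖dyadicMultiplier F φ j f x‖ₑ ≤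
      C * (dyadicBump s (2 ^ j) * (1 + ‖x‖ₑ) ^ (-(finrank ℝ E : ℝ))) := by
  obtain ⟨m, hm⟩ := exists_nat_ge s
  obtain ⟨η, rfl⟩ := exists_schwartzMap_eq_norm_sq_pow_mul hφ hφc hφ0 m
  obtain ⟨A, hA⟩ := exists_enorm_dyadicMultiplier_le_one_add_enorm_rpow
    (hφc.toSchwartzMap hφ) f
  obtain ⟨B, hB⟩ := exists_enorm_dyadicMultiplier_le_one_add_enorm_rpow η
    (SchwartzMap.fourierMultiplierCLM F (fun ξ => ((‖ξ‖ ^ 2 : ℝ) : ℂ) ^ m) f)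
  refine ⟨max A B, fun j x => ?_⟩
  rw [mul_left_comm, dyadicBump, mul_assoc]
  gcongr (_ ^ s) * ?_
  rcases le_total ((2 : ℝ≥0∞) ^ j) 1 with hj | hj
  · rw [max_eq_left hj, ENNReal.one_rpow, one_mul]
    exact (hA j x).trans (by gcongr; exact le_max_left A B)
  · have hscale : ‖((((2 : ℝ) ^ (-j)) ^ 2 : ℝ) : ℂ) ^ m‖ₑ ≤ (2 ^ j) ^ (-(2 * s)) := by
      rw [enorm_pow, ← ofReal_norm, Complex.norm_real, ofReal_norm, enorm_pow, enorm_two_zpow,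
        ENNReal.zpow_neg, ← ENNReal.rpow_neg_one, ← ENNReal.rpow_natCast, ← ENNReal.rpow_natCast,
        ← ENNReal.rpow_mul, ← ENNReal.rpow_mul]
      exact ENNReal.rpow_le_rpow_of_exponent_le hj (by push_cast; linarith)
    rw [max_eq_right hj, dyadicMultiplier_norm_sq_pow_mul, smul_apply, enorm_smul]
    grw [hscale, hB j x]
    gcongr _ * (?_ * _)
    exact_mod_cast le_max_right A B

end DyadicDecay

section LittlewoodPaleyFunction

variable {E : Type*} [NormedAddCommGroup E] [InnerProductSpace ℝ E] [FiniteDimensional ℝ E]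
  [MeasurableSpace E] [BorelSpace E] {F : Type*} [NormedAddCommGroup F] [NormedSpace ℂ F]

/-- The function `(∑_N (Nˢ |P_N f|)ʳ)^(1/r)`, whose `L^q` norm is the norm of `f` in `Ḟ^s_{q,r}`. -/
def littlewoodPaleyFunction (s r : ℝ) (ψ : E → ℂ) (f : 𝓢(E, F)) (x : E) : ℝ≥0∞ :=
  (∑' j : ℤ, ((2 ^ j) ^ s * ‖dyadicMultiplier F ψ j f x‖ₑ) ^ r) ^ (1 / r)

theorem measurable_littlewoodPaleyFunction (s r : ℝ) (ψ : E → ℂ) (f : 𝓢(E, F)) :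
    Measurable (littlewoodPaleyFunction s r ψ f) :=
  (Measurable.tsum fun j =>
    ((dyadicMultiplier F ψ j f).continuous.enorm.measurable.const_mul _).pow_const r).pow_const _

theorem dyadicSup_le_littlewoodPaleyFunction {r : ℝ} (hr : 0 < r) (s : ℝ) (ψ : E → ℂ)
    (f : 𝓢(E, F)) (x : E) : dyadicSup s ψ f x ≤ littlewoodPaleyFunction s r ψ f x := by
  refine iSup_le fun j => ?_
  rw [littlewoodPaleyFunction, one_div, ENNReal.le_rpow_inv_iff hr]
  exact ENNReal.le_tsum (f := fun j : ℤ => ((2 ^ j) ^ s * ‖dyadicMultiplier F ψ j f x‖ₑ) ^ r) j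

variable [CompleteSpace F]

theorem exists_littlewoodPaleyFunction_le {φ : E → ℂ} (hφ : ContDiff ℝ (⊤ : ℕ∞) φ)
    (hφc : HasCompactSupport φ) (hφ0 : 0 ∉ tsupport φ) {s r : ℝ} (hs : 0 < s) (hr : 0 < r)
    (f : 𝓢(E, F)) :
    ∃ C : ℝ≥0, ∀ x, littlewoodPaleyFunction s r φ f x ≤
      C * (1 + ‖x‖ₑ) ^ (-(finrank ℝ E : ℝ)) := by
  obtain ⟨A, hA⟩ := exists_two_zpow_rpow_mul_enorm_dyadicMultiplier_le hφ hφc hφ0 s f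
  obtain ⟨B, hB⟩ := exists_tsum_dyadicBump_le (mul_pos hs hr)
  have hr' : 0 ≤ 1 / r := by positivity
  refine ⟨B ^ (1 / r) * A, fun x => ?_⟩
  set w : ℝ≥0∞ := (1 + ‖x‖ₑ) ^ (-(finrank ℝ E : ℝ))
  calc littlewoodPaleyFunction s r φ f x
      ≤ (∑' j : ℤ, (dyadicBump s (2 ^ j) * (A * w)) ^ r) ^ (1 / r) := by
        rw [littlewoodPaleyFunction]
        gcongr (∑' j, ?_ ^ r) ^ _
        exact (hA _ x).trans_eq (mul_left_comm _ _ _)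
    _ = ((∑' j : ℤ, dyadicBump (s * r) (2 ^ j * 1)) * (A * w) ^ r) ^ (1 / r) := by
        simp only [ENNReal.mul_rpow_of_nonneg _ (A * w) hr.le, dyadicBump_rpow s hr.le, mul_one,
          ENNReal.tsum_mul_right]
    _ ≤ (B * (A * w) ^ r) ^ (1 / r) := by
        grw [hB 1 one_ne_zero ENNReal.one_ne_top]
    _ = (B ^ (1 / r) * A : ℝ≥0) * w := by
        rw [ENNReal.mul_rpow_of_nonneg _ _ hr', ← ENNReal.rpow_mul, mul_one_div_cancel hr.ne',
          ENNReal.rpow_one, ENNReal.coe_mul, ENNReal.coe_rpow_of_nonneg _ hr', mul_assoc]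

-- If this were infinite, the real-valued integral defining the norm would be the junk value `0`.
theorem lintegral_littlewoodPaleyFunction_rpow_lt_top [Nontrivial E] {φ : E → ℂ}
    (hφ : ContDiff ℝ (⊤ : ℕ∞) φ) (hφc : HasCompactSupport φ) (hφ0 : 0 ∉ tsupport φ) {s r q : ℝ}
    (hs : 0 < s) (hr : 0 < r) (hq : 1 < q) (f : 𝓢(E, F)) :
    ∫⁻ x, littlewoodPaleyFunction s r φ f x ^ q < ⊤ := by
  have hq0 : 0 ≤ q := by positivity
  obtain ⟨C, hC⟩ := exists_littlewoodPaleyFunction_le hφ hφc hφ0 hs hr f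
  have hn : (finrank ℝ E : ℝ) < finrank ℝ E * q :=
    lt_mul_of_one_lt_right (Nat.cast_pos.2 finrank_pos) hq
  calc ∫⁻ x, littlewoodPaleyFunction s r φ f x ^ q
      ≤ ∫⁻ x : E, C ^ q * (1 + ‖x‖ₑ) ^ (-(finrank ℝ E * q)) := by
        refine lintegral_mono fun x => ?_
        grw [hC x]
        rw [ENNReal.mul_rpow_of_nonneg _ _ hq0, ← ENNReal.rpow_mul, neg_mul]
    _ < ⊤ := by
        rw [lintegral_const_mul' _ _ (by finiteness)]
        exact ENNReal.mul_lt_top (by finiteness) (lintegral_one_add_enorm_rpow_lt_top volume hn)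

end LittlewoodPaleyFunction

section RealIntegrals

theorem integral_norm_rpow_eq_toReal_lintegral {α F : Type*} [MeasurableSpace α]
    [NormedAddCommGroup F] {μ : Measure α} {g : α → F} (hg : AEStronglyMeasurable g μ) {q : ℝ}
    (hq : 0 ≤ q) : ∫ x, ‖g x‖ ^ q ∂μ = (∫⁻ x, ‖g x‖ₑ ^ q ∂μ).toReal := by
  rw [← integral_toReal (hg.enorm.pow_const q) (.of_forall fun x => by finiteness)]
  simp_rw [← ENNReal.toReal_rpow, toReal_enorm]

variable {E : Type*} [NormedAddCommGroup E] [InnerProductSpace ℝ E] [FiniteDimensional ℝ E]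
  [MeasurableSpace E] [BorelSpace E]

theorem integral_norm_rpow_div_norm_rpow_eq_toReal_lintegral [Nontrivial E] {F : Type*}
    [NormedAddCommGroup F] {μ : Measure E} [μ.IsAddHaarMeasure] {f : E → F}
    (hf : AEStronglyMeasurable f μ) (s : ℝ) {q : ℝ} (hq : 0 ≤ q) :
    ∫ x, ‖f x‖ ^ q / ‖x‖ ^ (s * q) ∂μ = (∫⁻ x, (‖f x‖ₑ / ‖x‖ₑ ^ s) ^ q ∂μ).toReal := by
  have hmeas : AEMeasurable (fun x => (‖f x‖ₑ / ‖x‖ₑ ^ s) ^ q) μ :=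
    (hf.enorm.div (by fun_prop)).pow_const q
  rw [← integral_toReal hmeas]
  · congr! 2 with x
    rw [← ENNReal.toReal_rpow, ENNReal.toReal_div, ← ENNReal.toReal_rpow, toReal_enorm,
      toReal_enorm, div_rpow (by positivity) (by positivity), rpow_mul (by positivity)]
  · filter_upwards [Measure.ae_ne μ 0] with x hx
    have hx0 : ‖x‖ₑ ≠ 0 := enorm_ne_zero.2 hx
    finiteness

variable {F : Type*} [NormedAddCommGroup F] [NormedSpace ℂ F]

theorem toReal_littlewoodPaleyFunction_rpow (s : ℝ) {r : ℝ} (hr : 0 ≤ r) (q : ℝ) (ψ : E → ℂ)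
    (f : 𝓢(E, F)) (x : E) : (littlewoodPaleyFunction s r ψ f x ^ q).toReal =
      (∑' j : ℤ, ((2 : ℝ) ^ j) ^ (s * r) * ‖dyadicMultiplier F ψ j f x‖ ^ r) ^ (q / r) := by
  rw [littlewoodPaleyFunction, ← ENNReal.rpow_mul, ← ENNReal.toReal_rpow,
    ENNReal.tsum_toReal_eq fun j => ENNReal.rpow_ne_top_of_nonneg hr <| ENNReal.mul_ne_top
      (ENNReal.rpow_ne_top_of_ne_zero (two_zpow_ne_zero j) (two_zpow_ne_top j)) enorm_ne_top,
    one_div_mul_eq_div]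
  congr! 3 with j
  rw [← ENNReal.toReal_rpow, ENNReal.toReal_mul, ← ENNReal.toReal_rpow, toReal_enorm,
    ← enorm_two_zpow, toReal_enorm, Real.norm_of_nonneg (by positivity),
    mul_rpow (by positivity) (by positivity), rpow_mul (by positivity)]

variable [CompleteSpace F] [Nontrivial E]

theorem IsLittlewoodPaley.exists_integral_norm_rpow_div_norm_rpow_le {ψ : E → ℂ}
    (hψ : IsLittlewoodPaley ψ) {s q r : ℝ} (hs : 0 < s) (hq : 1 < q) (hsq : s * q < finrank ℝ E)
    (hr : 0 < r) :
    ∃ C : ℝ, 0 < C ∧ ∀ f : 𝓢(E, F), ∫ x, ‖f x‖ ^ q / ‖x‖ ^ (s * q) ≤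
      C * ∫ x, (∑' j : ℤ,
        ((2 : ℝ) ^ j) ^ (s * r) * ‖dyadicMultiplier F ψ j f x‖ ^ r) ^ (q / r) := by
  obtain ⟨C, hC⟩ := hψ.exists_lintegral_enorm_div_rpow_le_dyadicSup (F := F) hs hq hsq
  refine ⟨C + 1, by positivity, fun f => ?_⟩
  have hfin := lintegral_littlewoodPaleyFunction_rpow_lt_top hψ.contDiff hψ.hasCompactSupport
    hψ.zero_notMem_tsupport hs hr hq f
  have hmeas := (measurable_littlewoodPaleyFunction s r ψ f).pow_const q
  simp_rw [← toReal_littlewoodPaleyFunction_rpow s hr.le]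
  rw [integral_norm_rpow_div_norm_rpow_eq_toReal_lintegral f.continuous.aestronglyMeasurable s
    (by positivity), integral_toReal hmeas.aemeasurable (ae_lt_top hmeas hfin.ne)]
  have hle : ∫⁻ x, (‖f x‖ₑ / ‖x‖ₑ ^ s) ^ q ≤
      (C + 1 : ℝ≥0) * ∫⁻ x, littlewoodPaleyFunction s r ψ f x ^ q := by
    grw [hC f, ← le_self_add (a := C) (b := 1)]
    gcongr with x
    exact dyadicSup_le_littlewoodPaleyFunction hr s ψ f x
  simpa only [ENNReal.toReal_mul, ENNReal.coe_toReal, NNReal.coe_add, NNReal.coe_one] using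
    ENNReal.toReal_mono (ENNReal.mul_ne_top ENNReal.coe_ne_top hfin.ne) hle

end RealIntegrals

section RefinedGradientHardy

theorem rpow_le_of_le_mul_of_le_mul {x y z a b p θ : ℝ} (hx : 0 ≤ x) (hy : 0 ≤ y) (hz : 0 ≤ z)
    (ha : 0 < a) (hb : 0 < b) (hxy : x ≤ a * y) (hxz : x ≤ b * z) (hp : 0 < p)
    (hθ : θ ∈ Icc (0 : ℝ) 1) :
    x ^ p ≤ (a ^ p) ^ θ * (b ^ p) ^ (1 - θ) * (y ^ p) ^ θ * (z ^ p) ^ (1 - θ) := by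
  have hθ' : 0 ≤ 1 - θ := sub_nonneg.2 hθ.2
  calc x ^ p = (x ^ p) ^ θ * (x ^ p) ^ (1 - θ) := by
        rw [← rpow_add' (by positivity) (by simp), add_sub_cancel, rpow_one]
    _ ≤ ((a * y) ^ p) ^ θ * ((b * z) ^ p) ^ (1 - θ) := by
        have := hθ.1
        gcongr
    _ = _ := by
        rw [mul_rpow ha.le hy, mul_rpow hb.le hz, mul_rpow (by positivity) (by positivity),
          mul_rpow (by positivity) (by positivity)]
        ring

variable {E F : Type*} [NormedAddCommGroup E] [InnerProductSpace ℝ E] [FiniteDimensional ℝ E]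
  [MeasurableSpace E] [BorelSpace E] [NormedAddCommGroup F]

theorem integral_norm_rpow_div_norm_rpow_le_fderiv [NormedSpace ℝ F] (μ : Measure E)
    [μ.IsAddHaarMeasure] {q : ℝ} (hq : 1 ≤ q) (hqn : q < finrank ℝ E) {f : E → F}
    (hf : ContDiff ℝ 1 f) (hf0 : Tendsto f (Bornology.cobounded E) (𝓝 0))
    (hf' : MemLp (fderiv ℝ f) (ENNReal.ofReal q) μ) :
    ∫ x, ‖f x‖ ^ q / ‖x‖ ^ q ∂μ ≤
      (q / (finrank ℝ E - q)) ^ q * ∫ x, ‖fderiv ℝ f x‖ ^ q ∂μ := by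
  have hq0 : 0 < q := by positivity
  have hnq : 0 < finrank ℝ E - q := sub_pos.2 hqn
  have : Nontrivial E := nontrivial_of_finrank_pos (R := ℝ) (by exact_mod_cast hq0.trans hqn)
  have hfin : ∫⁻ x, ‖fderiv ℝ f x‖ₑ ^ q ∂μ < ⊤ := by
    simpa [ENNReal.toReal_ofReal hq0.le] using lintegral_rpow_enorm_lt_top_of_eLpNorm_lt_top
      (by simpa using hq0) ENNReal.ofReal_ne_top hf'.2
  have hHardy := lintegral_enorm_div_enorm_rpow_le_fderiv μ hq hqn hf hf0
  have hleft := integral_norm_rpow_div_norm_rpow_eq_toReal_lintegral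
    (hf.continuous.aestronglyMeasurable (μ := μ)) 1 hq0.le
  simp only [one_mul, ENNReal.rpow_one] at hleft
  rw [hleft, integral_norm_rpow_eq_toReal_lintegral hf'.1 hq0.le]
  simpa only [ENNReal.toReal_mul, ← ENNReal.toReal_rpow, ENNReal.toReal_ofReal
    (div_nonneg hq0.le hnq.le)] using ENNReal.toReal_mono (by finiteness) hHardy

theorem refined_gradient_hardy_general [NormedSpace ℂ F] [CompleteSpace F] {ψ : E → ℂ}
    (hψ : IsLittlewoodPaley ψ) {q r θ : ℝ} (hq : 1 < q) (hqn : q < finrank ℝ E) (hr : 0 < r)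
    (hθ : θ ∈ Icc (0 : ℝ) 1) :
    ∃ C : ℝ, 0 < C ∧ ∀ f : 𝓢(E, F), ∀ P : ℤ → E → F,
      (∀ j x, P j x = 𝓕⁻ (fun ξ => ψ ((2 : ℝ) ^ (-j) • ξ) • 𝓕 (f : E → F) ξ) x) →
      (∫ x, ‖f x‖ ^ q / ‖x‖ ^ q) ^ (1 / q) ≤
        C * ((∫ x, ‖fderiv ℝ f x‖ ^ q) ^ (1 / q)) ^ θ *
          ((∫ x, (∑' j : ℤ, ((2 : ℝ) ^ j) ^ r * ‖P j x‖ ^ r) ^ (q / r)) ^ (1 / q)) ^ (1 - θ) := by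
  have hq0 : 0 < q := by positivity
  have : Nontrivial E := nontrivial_of_finrank_pos (R := ℝ) (by exact_mod_cast hq0.trans hqn)
  have hgradient : 0 < (q / (finrank ℝ E - q)) ^ q := by have := sub_pos.2 hqn; positivity
  obtain ⟨φ, rfl⟩ := hψ.exists_schwartzMap
  obtain ⟨C, hC0, hC⟩ := hψ.exists_integral_norm_rpow_div_norm_rpow_le (F := F) one_pos hq
    (by rwa [one_mul]) hr
  simp only [one_mul] at hC
  refine ⟨(((q / (finrank ℝ E - q)) ^ q) ^ (1 / q)) ^ θ * (C ^ (1 / q)) ^ (1 - θ), by positivity,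
    fun f P hP => ?_⟩
  simp only [hP, ← dyadicMultiplier_apply]
  have hHardy := integral_norm_rpow_div_norm_rpow_le_fderiv volume hq.le hqn (f.smooth 1)
    (Metric.cobounded_eq_cocompact (α := E) ▸ f.tendsto_cocompact)
    ((SchwartzMap.fderivCLM ℝ E F f).memLp _ volume)
  exact rpow_le_of_le_mul_of_le_mul (by positivity) (by positivity) (by positivity) hgradient hC0
    hHardy (hC f) (by positivity) hθ

end RefinedGradientHardy

end

/-- Refined Hardy inequality for the gradient: for `2 < q < d` and a Littlewood–Paley
partition function `ψ`, there is `C = C(d,q,ψ)` such that for every Schwartz `f`,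
`‖f/|x|‖_{L^q} ≤ C ‖∇f‖_{L^q}^{1/q} ‖f‖_{Ḟ^1_{q,2(q-1)}}^{(q-1)/q}`,
where `P_N f = 𝓕⁻¹(ψ(·/N) 𝓕 f)` and `‖f‖_{Ḟ^s_{q,r}} = ‖(∑_N N^{sr} |P_N f|^r)^{1/r}‖_{L^q}`. -/
theorem refined_gradient_hardy (d : ℕ) (q : ℝ) (hq : 2 < q) (hqd : q < d)
    (ψ : EuclideanSpace ℝ (Fin d) → ℝ) (hψsmooth : ContDiff ℝ (⊤ : ℕ∞) ψ)
    (hψrange : ∀ ξ, ψ ξ ∈ Set.Icc (0 : ℝ) 1)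
    (hψsupp : Function.support ψ ⊆ {ξ | 1 / 2 ≤ ‖ξ‖ ∧ ‖ξ‖ ≤ 2})
    (hψsum : ∀ ξ : EuclideanSpace ℝ (Fin d), ξ ≠ 0 →
      ∑' j : ℤ, ψ ((2 : ℝ) ^ (-j) • ξ) = 1) :
    ∃ C : ℝ, 0 < C ∧ ∀ f : SchwartzMap (EuclideanSpace ℝ (Fin d)) ℂ,
      ∀ P : ℤ → EuclideanSpace ℝ (Fin d) → ℂ,
      (∀ j x, P j x = 𝓕⁻ (fun ξ => (ψ ((2 : ℝ) ^ (-j) • ξ) : ℂ) * 𝓕 (⇑f) ξ) x) →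
      (∫ x : EuclideanSpace ℝ (Fin d), ‖f x‖ ^ q / ‖x‖ ^ q) ^ (1 / q) ≤
        C * ((∫ x : EuclideanSpace ℝ (Fin d), ‖fderiv ℝ (⇑f) x‖ ^ q) ^ (1 / q)) ^ (1 / q) *
          ((∫ x : EuclideanSpace ℝ (Fin d),
              (∑' j : ℤ, ((2 : ℝ) ^ j) ^ (2 * (q - 1)) *
                ‖P j x‖ ^ (2 * (q - 1))) ^ (q / (2 * (q - 1)))) ^ (1 / q)) ^ ((q - 1) / q) := by
  have hψ := IsLittlewoodPaley.of_annulus one_half_pos hψsmooth hψsupp hψsum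
  rw [sub_div, div_self (by positivity)]
  exact refined_gradient_hardy_general hψ (by linarith) (by simpa using hqd) (by linarith)
    ⟨by positivity, (div_le_one (by positivity)).2 (by linarith)⟩
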